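/- arXiv:1805.10838 — 3 statements merged into one kernel-verified Lean document; each statement's English description precedes it below -/
import Mathlib

section
/- Let f satisfy (f.1)–(f.3). For every ε > 0 there exists h* > 0 such that for every x₀ ∈ B(R₀) and every h ∈ (0, h*], if x(·) is the solution of the Caputo problem (^C D^α x)(t) = f(t,x(t)), x(0) = x₀, and y(·) is the solution of the approximating problem ẏ(t) = f(t, x₀ + h^{α−1}(Δ_h^{1−α} y)(t)), y(0) = 0, then ‖x(t) − x₀ − h^{α−1}(Δ_h^{1−α} y)(t)‖ ≤ ε for all t ∈ [0,T]. -/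
open MeasureTheory Set Real RealInnerProductSpace

noncomputable section

abbrev Evec (n : ℕ) := EuclideanSpace ℝ (Fin n)

/-- Generalized binomial coefficient `binom a j`. -/
def binomR (a : ℝ) (j : ℕ) : ℝ :=
  (∏ i ∈ Finset.range j, (a - (i : ℝ))) / (Nat.factorial j : ℝ)

/-- Left-sided Riemann–Liouville fractional integral of order `α` with base point `0`. -/
def RLint {E : Type*} [NormedAddCommGroup E] [NormedSpace ℝ E]
    (α : ℝ) (f : ℝ → E) (t : ℝ) : E :=
  (Real.Gamma α)⁻¹ • ∫ τ in (0:ℝ)..t, ((t - τ) ^ (α - 1) : ℝ) • f τ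

/-- Left-sided Riemann–Liouville fractional derivative of order `α` with base point `0`. -/
def RLderiv {E : Type*} [NormedAddCommGroup E] [NormedSpace ℝ E]
    (α : ℝ) (x : ℝ → E) (t : ℝ) : E :=
  deriv (fun s => (Real.Gamma (1 - α))⁻¹ • ∫ τ in (0:ℝ)..s, ((s - τ) ^ (-α) : ℝ) • x τ) t

/-- Caputo fractional derivative of order `α` with base point `0`. -/
def CapDeriv {E : Type*} [NormedAddCommGroup E] [NormedSpace ℝ E]
    (α : ℝ) (x : ℝ → E) (t : ℝ) : E :=
  RLderiv α (fun s => x s - x 0) t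

/-- Grünwald–Letnikov fractional difference of order `α` with step `h`. -/
def GLdiff {E : Type*} [NormedAddCommGroup E] [NormedSpace ℝ E]
    (α h : ℝ) (x : ℝ → E) (t : ℝ) : E :=
  ∑ j ∈ Finset.range (⌊t / h⌋₊ + 1), ((-1 : ℝ) ^ j * binomR α j) • x (t - (j : ℝ) * h)

/-- The kernel `p_α`. -/
def pker (α : ℝ) (τ : ℝ) : ℝ :=
  (Real.Gamma α)⁻¹ * ∑ j ∈ Finset.range ⌈τ⌉₊, (-1 : ℝ) ^ j * binomR α j * ((τ - (j : ℝ)) ^ (α - 1) : ℝ)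

/-- Mittag-Leffler function `E_α`. -/
def mittagLeffler (α z : ℝ) : ℝ := ∑' k : ℕ, z ^ k / Real.Gamma (α * (k : ℝ) + 1)

/-- `x` is a solution of the Caputo Cauchy problem `(^C D^α x)(t) = f(t, x(t))`, `x 0 = x₀`. -/
def IsCaputoSol (α T : ℝ) {n : ℕ} (f : ℝ → Evec n → Evec n) (x₀ : Evec n)
    (x : ℝ → Evec n) : Prop :=
  (∃ φ : ℝ → Evec n, Measurable φ ∧
    (∃ C : ℝ, ∀ᵐ t ∂volume.restrict (Icc (0:ℝ) T), ‖φ t‖ ≤ C) ∧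
    ∀ t ∈ Icc (0:ℝ) T, x t = x₀ + RLint α φ t) ∧
  ∀ᵐ t ∂volume.restrict (Icc (0:ℝ) T), CapDeriv α x t = f t (x t)

/-- `y` is a solution of the approximating retarded functional-differential Cauchy problem. -/
def IsApproxSol (α T h : ℝ) {n : ℕ} (f : ℝ → Evec n → Evec n) (x₀ : Evec n)
    (y : ℝ → Evec n) : Prop :=
  (∃ Ly : NNReal, LipschitzOnWith Ly y (Icc (0:ℝ) T)) ∧ y 0 = 0 ∧
  ∀ᵐ t ∂volume.restrict (Icc (0:ℝ) T),
    HasDerivAt y (f t (x₀ + ((h ^ (α - 1) : ℝ)) • GLdiff (1 - α) h y t)) t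

/-- `x` is a motion of the conflict-controlled Caputo system for realizations `u`, `v`. -/
def IsCtrlSol (α T : ℝ) {n nu nv : ℕ}
    (g : ℝ → Evec n → Evec nu → Evec nv → Evec n) (x₀ : Evec n)
    (u : ℝ → Evec nu) (v : ℝ → Evec nv) (x : ℝ → Evec n) : Prop :=
  (∃ φ : ℝ → Evec n, Measurable φ ∧
    (∃ C : ℝ, ∀ᵐ t ∂volume.restrict (Icc (0:ℝ) T), ‖φ t‖ ≤ C) ∧
    ∀ t ∈ Icc (0:ℝ) T, x t = x₀ + RLint α φ t) ∧
  ∀ᵐ t ∂volume.restrict (Icc (0:ℝ) T), CapDeriv α x t = g t (x t) (u t) (v t)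

/-- `y` is a motion of the approximating conflict-controlled system for realizations `ũ`, `ṽ`. -/
def IsCtrlApproxSol (α T h : ℝ) {n nu nv : ℕ}
    (g : ℝ → Evec n → Evec nu → Evec nv → Evec n) (x₀ : Evec n)
    (ut : ℝ → Evec nu) (vt : ℝ → Evec nv) (y : ℝ → Evec n) : Prop :=
  (∃ Ly : NNReal, LipschitzOnWith Ly y (Icc (0:ℝ) T)) ∧ y 0 = 0 ∧
  ∀ᵐ t ∂volume.restrict (Icc (0:ℝ) T),
    HasDerivAt y (g t (x₀ + ((h ^ (α - 1) : ℝ)) • GLdiff (1 - α) h y t) (ut t) (vt t)) t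



def glA (α : ℝ) (m : ℕ) : ℝ := ∑ j ∈ Finset.range (m + 1), (-1 : ℝ) ^ j * binomR (1 - α) j

def glK (α h s : ℝ) : ℝ := h ^ (α - 1) * glA α ⌊s / h⌋₊

lemma binom_aux (α : ℝ) (m : ℕ) :
    (-1 : ℝ) ^ (m + 1) * ∏ i ∈ Finset.range (m + 1), (1 - α - (i : ℝ))
      = (α - 1) * ∏ i ∈ Finset.range m, (α + (i : ℝ)) := by
  induction m with
  | zero => simp
  | succ m ih =>
    rw [Finset.prod_range_succ _ (m + 1), pow_succ, Finset.prod_range_succ (fun i : ℕ => α + (i : ℝ)) m]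
    calc _ = ((-1 : ℝ) ^ (m + 1) * ∏ i ∈ Finset.range (m + 1), (1 - α - (i : ℝ)))
          * (-(1 - α - ((m + 1 : ℕ) : ℝ))) := by ring
      _ = _ := by rw [ih]; push_cast; ring

lemma glA_eq (α : ℝ) (m : ℕ) :
    glA α m * (Nat.factorial m : ℝ) = ∏ i ∈ Finset.range m, (α + (i : ℝ)) := by
  induction m with
  | zero => simp [glA, binomR]
  | succ m ih =>
    have h1 : glA α (m + 1) = glA α m + (-1 : ℝ) ^ (m + 1) * binomR (1 - α) (m + 1) := by
      simp only [glA]; rw [Finset.sum_range_succ]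
    have hf : ((Nat.factorial (m + 1) : ℕ) : ℝ) ≠ 0 := by positivity
    have h2 : (-1 : ℝ) ^ (m + 1) * binomR (1 - α) (m + 1) * (Nat.factorial (m + 1) : ℝ)
        = (α - 1) * ∏ i ∈ Finset.range m, (α + (i : ℝ)) := by
      rw [← binom_aux, binomR]; field_simp
    rw [h1, add_mul, h2, Nat.factorial_succ, Finset.prod_range_succ, ← ih]
    push_cast; ring

lemma gamma_prod {α : ℝ} (hα : 0 < α) (m : ℕ) :
    Real.Gamma ((m : ℝ) + α) = Real.Gamma α * ∏ i ∈ Finset.range m, (α + (i : ℝ)) := by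
  induction m with
  | zero => simp
  | succ m ih =>
    have : ((m + 1 : ℕ) : ℝ) + α = ((m : ℝ) + α) + 1 := by push_cast; ring
    rw [this, Real.Gamma_add_one (by positivity), ih, Finset.prod_range_succ]; ring

lemma glA_gamma {α : ℝ} (hα : 0 < α) (m : ℕ) :
    Real.Gamma α * glA α m = Real.Gamma ((m : ℝ) + α) / Real.Gamma ((m : ℝ) + 1) := by
  rw [Real.Gamma_nat_eq_factorial, gamma_prod hα, ← glA_eq]; field_simp

lemma glA_upper {α : ℝ} (hα : α ∈ Ioo (0:ℝ) 1) (m : ℕ) (hm : 1 ≤ m) :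
    Real.Gamma α * glA α m ≤ (m : ℝ) ^ (α - 1) := by
  have hm0 : (0:ℝ) < m := by exact_mod_cast hm
  have h1 := Real.Gamma_mul_add_mul_le_rpow_Gamma_mul_rpow_Gamma (s := (m:ℝ)) (t := (m:ℝ) + 1)
    (a := 1 - α) (b := α) hm0 (by positivity) (by linarith [hα.2]) hα.1 (by ring)
  have hG : 0 < Real.Gamma (m : ℝ) := Real.Gamma_pos_of_pos hm0
  rw [glA_gamma hα.1, div_le_iff₀ (Real.Gamma_pos_of_pos (by positivity))]
  have e1 : (1 - α) * (m:ℝ) + α * ((m:ℝ) + 1) = m + α := by ring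
  rw [e1] at h1
  refine h1.trans (le_of_eq ?_)
  rw [Real.Gamma_add_one hm0.ne', Real.mul_rpow hm0.le hG.le]
  have e2 : Real.Gamma (m:ℝ) ^ (1 - α) * Real.Gamma (m:ℝ) ^ α = Real.Gamma (m:ℝ) := by
    rw [← Real.rpow_add hG]; simp
  have e3 : (m:ℝ) ^ (α - 1) * m = (m:ℝ) ^ α := by
    rw [Real.rpow_sub_one hm0.ne']; field_simp
  rw [← mul_assoc ((m:ℝ) ^ (α - 1)), e3]
  calc _ = (m:ℝ) ^ α * (Real.Gamma (m:ℝ) ^ (1 - α) * Real.Gamma (m:ℝ) ^ α) := by ring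
    _ = _ := by rw [e2]

lemma glA_lower {α : ℝ} (hα : α ∈ Ioo (0:ℝ) 1) (m : ℕ) :
    ((m : ℝ) + 1) ^ (α - 1) ≤ Real.Gamma α * glA α m := by
  have hm0 : (0:ℝ) < m + α := by have := hα.1; positivity
  have h1 := Real.Gamma_mul_add_mul_le_rpow_Gamma_mul_rpow_Gamma (s := (m:ℝ) + α)
    (t := (m:ℝ) + α + 1)
    (a := α) (b := 1 - α) hm0 (by positivity) hα.1 (by linarith [hα.2]) (by ring)
  have hG : 0 < Real.Gamma ((m : ℝ) + α) := Real.Gamma_pos_of_pos hm0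
  rw [glA_gamma hα.1, le_div_iff₀ (Real.Gamma_pos_of_pos (by positivity))]
  have e1 : α * ((m:ℝ) + α) + (1 - α) * ((m:ℝ) + α + 1) = m + 1 := by ring
  rw [e1, Real.Gamma_add_one hm0.ne', Real.mul_rpow hm0.le hG.le] at h1
  have e2 : Real.Gamma ((m:ℝ) + α) ^ α * Real.Gamma ((m:ℝ) + α) ^ (1 - α)
      = Real.Gamma ((m:ℝ) + α) := by
    rw [← Real.rpow_add hG]; simp
  have h2 : Real.Gamma ((m:ℝ) + 1) ≤ ((m:ℝ) + α) ^ (1 - α) * Real.Gamma ((m:ℝ) + α) := by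
    refine h1.trans (le_of_eq ?_)
    calc _ = ((m:ℝ) + α) ^ (1 - α) * (Real.Gamma ((m:ℝ) + α) ^ α * Real.Gamma ((m:ℝ) + α) ^ (1 - α)) := by ring
      _ = _ := by rw [e2]
  have h3 : ((m:ℝ) + α) ^ (1 - α) ≤ ((m:ℝ) + 1) ^ (1 - α) :=
    Real.rpow_le_rpow hm0.le (by linarith [hα.2]) (by linarith [hα.2])
  have hp : (0:ℝ) < (m:ℝ) + 1 := by positivity
  calc ((m : ℝ) + 1) ^ (α - 1) * Real.Gamma ((m:ℝ) + 1)
      ≤ ((m : ℝ) + 1) ^ (α - 1) * (((m:ℝ) + 1) ^ (1 - α) * Real.Gamma ((m:ℝ) + α)) := by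
        gcongr
        exact h2.trans (by gcongr)
    _ = _ := by
        rw [← mul_assoc, ← Real.rpow_add hp]; simp

lemma glA_zero (α : ℝ) : glA α 0 = 1 := by simp [glA, binomR]

lemma glA_nonneg {α : ℝ} (hα : α ∈ Ioo (0:ℝ) 1) (m : ℕ) : 0 ≤ Real.Gamma α * glA α m :=
  le_trans (by positivity) (glA_lower hα m)

lemma unit_bound {α : ℝ} (hα : α ∈ Ioo (0:ℝ) 1) {u : ℝ} (hu : 0 < u) :
    |Real.Gamma α * glA α ⌊u⌋₊| ≤ (Real.Gamma α + 2) * u ^ (α - 1) := by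
  have hG := Real.Gamma_pos_of_pos hα.1
  rw [abs_of_nonneg (glA_nonneg hα _)]
  rcases lt_or_ge u 1 with h | h
  · rw [Nat.floor_eq_zero.2 h, glA_zero, mul_one]
    have : 1 ≤ u ^ (α - 1) := Real.one_le_rpow_of_pos_of_le_one_of_nonpos hu h.le (by linarith [hα.2])
    nlinarith
  · have hm : 1 ≤ ⌊u⌋₊ := (Nat.one_le_floor_iff _).2 h
    have hm' : (1:ℝ) ≤ (⌊u⌋₊ : ℝ) := by exact_mod_cast hm
    have hlt := Nat.lt_floor_add_one u
    refine (glA_upper hα _ hm).trans ?_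
    have h1 : ((⌊u⌋₊ : ℕ) : ℝ) ^ (α - 1) ≤ (u / 2) ^ (α - 1) :=
      Real.rpow_le_rpow_of_nonpos (by positivity) (by linarith) (by linarith [hα.2])
    have h2 : (u / 2) ^ (α - 1) = 2 ^ (1 - α) * u ^ (α - 1) := by
      rw [Real.div_rpow hu.le (by norm_num), div_eq_mul_inv, ← Real.rpow_neg (by norm_num)]
      rw [mul_comm]; ring_nf
    have h3 : (2:ℝ) ^ (1 - α) ≤ 2 := by
      calc (2:ℝ) ^ (1 - α) ≤ 2 ^ (1:ℝ) := Real.rpow_le_rpow_of_exponent_le (by norm_num) (by linarith [hα.1])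
        _ = 2 := by simp
    rw [h2] at h1
    refine h1.trans ?_
    gcongr
    linarith

lemma unit_diff {α : ℝ} (hα : α ∈ Ioo (0:ℝ) 1) {u : ℝ} (hu : 0 < u) :
    |u ^ (α - 1) - Real.Gamma α * glA α ⌊u⌋₊| ≤ (Real.Gamma α + 4) * u ^ (α / 2 - 1) := by
  have hG := Real.Gamma_pos_of_pos hα.1
  have ha := hα.1
  have ha' := hα.2
  rcases lt_or_ge u 1 with h | h
  · rw [Nat.floor_eq_zero.2 h, glA_zero, mul_one]
    have h1 : 1 ≤ u ^ (α / 2 - 1) := Real.one_le_rpow_of_pos_of_le_one_of_nonpos hu h.le (by linarith)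
    have h2 : u ^ (α - 1) ≤ u ^ (α / 2 - 1) :=
      Real.rpow_le_rpow_of_exponent_ge hu h.le (by linarith)
    have h3 : 0 ≤ u ^ (α - 1) := by positivity
    rw [abs_le]; constructor <;> nlinarith
  · have hm : 1 ≤ ⌊u⌋₊ := (Nat.one_le_floor_iff _).2 h
    have hm' : (1:ℝ) ≤ (⌊u⌋₊ : ℝ) := by exact_mod_cast hm
    have hlt := Nat.lt_floor_add_one u
    have hle := Nat.floor_le hu.le
    have up := glA_upper hα _ hm
    have lo := glA_lower hα ⌊u⌋₊
    set m : ℝ := (⌊u⌋₊ : ℝ) with hmdef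
    have hm0 : 0 < m := by linarith
    have up' : u ^ (α - 1) ≤ m ^ (α - 1) :=
      Real.rpow_le_rpow_of_nonpos hm0 hle (by linarith)
    have lo' : (m + 1) ^ (α - 1) ≤ u ^ (α - 1) :=
      Real.rpow_le_rpow_of_nonpos hu hlt.le (by linarith)
    have key : m ^ (α - 1) - (m + 1) ^ (α - 1) ≤ m ^ (α - 2) := by
      have e1 : m ^ (α - 1) = m ^ α / m := Real.rpow_sub_one hm0.ne' _
      have e2 : (m + 1) ^ (α - 1) = (m + 1) ^ α / (m + 1) := Real.rpow_sub_one (by positivity) _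
      have e3 : m ^ (α - 2) = m ^ α / m ^ 2 := by
        rw [Real.rpow_sub hm0]; norm_num
      have e4 : m ^ α ≤ (m + 1) ^ α := Real.rpow_le_rpow hm0.le (by linarith) ha.le
      have e5 : m ^ α / (m + 1) ≤ (m + 1) ^ α / (m + 1) := by gcongr
      have e6 : 0 < m ^ α := by positivity
      rw [e1, e2, e3]
      have e7 : m ^ α / m - m ^ α / (m + 1) ≤ m ^ α / m ^ 2 := by
        rw [div_sub_div _ _ hm0.ne' (by positivity), div_le_div_iff₀ (by positivity) (by positivity)]
        nlinarith [mul_pos e6 hm0, mul_pos (mul_pos e6 hm0) hm0]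
      linarith
    have k2 : m ^ (α - 2) ≤ (u / 2) ^ (α - 2) :=
      Real.rpow_le_rpow_of_nonpos (by positivity) (by linarith) (by linarith)
    have k3 : (u / 2) ^ (α - 2) = 2 ^ (2 - α) * u ^ (α - 2) := by
      rw [Real.div_rpow hu.le (by norm_num), div_eq_mul_inv, ← Real.rpow_neg (by norm_num)]
      rw [mul_comm]; ring_nf
    have k4 : (2:ℝ) ^ (2 - α) ≤ 4 := by
      calc (2:ℝ) ^ (2 - α) ≤ 2 ^ (2:ℝ) := Real.rpow_le_rpow_of_exponent_le (by norm_num) (by linarith)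
        _ = 4 := by norm_num
    have k5 : u ^ (α - 2) ≤ u ^ (α / 2 - 1) := Real.rpow_le_rpow_of_exponent_le h (by linarith)
    have k6 : 0 < u ^ (α - 2) := by positivity
    have k7 : m ^ (α - 2) ≤ (Real.Gamma α + 4) * u ^ (α / 2 - 1) := by
      rw [k3] at k2
      calc m ^ (α - 2) ≤ 2 ^ (2 - α) * u ^ (α - 2) := k2
        _ ≤ (Real.Gamma α + 4) * u ^ (α / 2 - 1) := by
          gcongr; linarith
    rw [abs_le]; constructor <;> linarith

lemma glK_bound {α : ℝ} (hα : α ∈ Ioo (0:ℝ) 1) {h s : ℝ} (hh : 0 < h) (hs : 0 < s) :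
    |glK α h s| ≤ ((Real.Gamma α + 2) / Real.Gamma α) * s ^ (α - 1) := by
  have hG := Real.Gamma_pos_of_pos hα.1
  have h1 := unit_bound hα (div_pos hs hh)
  rw [abs_mul, abs_of_pos hG, Real.div_rpow hs.le hh.le] at h1
  have hp : 0 < h ^ (α - 1) := by positivity
  rw [glK, abs_mul, abs_of_pos hp, div_mul_eq_mul_div, le_div_iff₀ hG]
  have : (Real.Gamma α + 2) * s ^ (α - 1)
      = h ^ (α - 1) * ((Real.Gamma α + 2) * (s ^ (α - 1) / h ^ (α - 1))) := by field_simp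
  rw [this, mul_assoc, mul_comm |glA _ _|]
  gcongr

lemma glK_diff {α : ℝ} (hα : α ∈ Ioo (0:ℝ) 1) {h s : ℝ} (hh : 0 < h) (hs : 0 < s) :
    |(Real.Gamma α)⁻¹ * s ^ (α - 1) - glK α h s|
      ≤ ((Real.Gamma α + 4) / Real.Gamma α) * h ^ (α / 2) * s ^ (α / 2 - 1) := by
  have hG := Real.Gamma_pos_of_pos hα.1
  have h1 := unit_diff hα (div_pos hs hh)
  rw [Real.div_rpow hs.le hh.le, Real.div_rpow hs.le hh.le] at h1
  have hp : 0 < h ^ (α - 1) := by positivity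
  have e : (Real.Gamma α)⁻¹ * s ^ (α - 1) - glK α h s
    = (h ^ (α - 1) / Real.Gamma α) * (s ^ (α - 1) / h ^ (α - 1) - Real.Gamma α * glA α ⌊s / h⌋₊) := by
    rw [glK]; field_simp
  rw [e, abs_mul, abs_of_pos (by positivity)]
  refine (mul_le_mul_of_nonneg_left h1 (by positivity)).trans (le_of_eq ?_)
  have e2 : h ^ (α - 1) = h ^ (α / 2) * h ^ (α / 2 - 1) := by
    rw [← Real.rpow_add hh]; ring_nf
  rw [e2]; field_simp

lemma glK_meas (α h : ℝ) : Measurable (glK α h) := by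
  unfold glK
  exact measurable_const.mul ((measurable_from_nat (f := glA α)).comp
    (Nat.measurable_floor.comp (measurable_id.div_const h)))

lemma beta_int {α : ℝ} (hα : α ∈ Ioo (0:ℝ) 1) {a : ℝ} (ha : 0 < a) :
    ∫ u in (0:ℝ)..a, (a - u) ^ (-α) * u ^ (α - 1) = Real.Gamma α * Real.Gamma (1 - α) := by
  have h := Complex.betaIntegral_scaled (α : ℂ) ((1 - α : ℝ) : ℂ) ha
  rw [Complex.betaIntegral_eq_Gamma_mul_div _ _ (by simpa using hα.1)
    (by rw [Complex.ofReal_re]; linarith [hα.2])] at h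
  have e1 : (α : ℂ) + ((1 - α : ℝ) : ℂ) = 1 := by push_cast; ring
  rw [e1, Complex.Gamma_one, div_one, sub_self, Complex.cpow_zero, one_mul,
    Complex.Gamma_ofReal, Complex.Gamma_ofReal] at h
  apply Complex.ofReal_injective
  rw [← intervalIntegral.integral_ofReal, Complex.ofReal_mul, ← h]
  apply intervalIntegral.integral_congr
  intro u hu
  rw [uIcc_of_le ha.le] at hu
  simp only
  rw [Complex.ofReal_mul, Complex.ofReal_cpow (by linarith [hu.2]), Complex.ofReal_cpow hu.1, mul_comm]
  push_cast
  ring_nf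

lemma beta_intble {α : ℝ} (hα : α ∈ Ioo (0:ℝ) 1) {a : ℝ} (ha : 0 < a) :
    IntervalIntegrable (fun u : ℝ => (a - u) ^ (-α) * u ^ (α - 1)) volume 0 a := by
  apply intervalIntegral.intervalIntegrable_of_integral_ne_zero
  rw [beta_int hα ha]
  have := Real.Gamma_pos_of_pos hα.1
  have := Real.Gamma_pos_of_pos (s := 1 - α) (by linarith [hα.2])
  positivity

def bker (α s τ r : ℝ) : ℝ := if r < τ then (s - τ) ^ (-α) * (τ - r) ^ (α - 1) else 0

lemma bker_ind (α s r : ℝ) : (fun τ => bker α s τ r)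
    = (Ioi r).indicator (fun τ => (s - τ) ^ (-α) * (τ - r) ^ (α - 1)) := by
  ext τ; simp [bker, indicator]

lemma bker_nonneg {α s τ r : ℝ} (h : τ ≤ s) : 0 ≤ bker α s τ r := by
  unfold bker
  split_ifs with h1
  · exact mul_nonneg (Real.rpow_nonneg (by linarith) _) (Real.rpow_nonneg (by linarith) _)
  · exact le_rfl

lemma bker_meas (α s : ℝ) : Measurable (fun p : ℝ × ℝ => bker α s p.1 p.2) := by
  unfold bker
  refine Measurable.ite (measurableSet_lt measurable_snd measurable_fst) ?_ measurable_const
  fun_prop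

lemma bker_shift {α : ℝ} (hα : α ∈ Ioo (0:ℝ) 1) {s r : ℝ} (hrs : r < s) :
    IntervalIntegrable (fun τ : ℝ => (s - τ) ^ (-α) * (τ - r) ^ (α - 1)) volume r s ∧
    ∫ τ in r..s, (s - τ) ^ (-α) * (τ - r) ^ (α - 1) = Real.Gamma α * Real.Gamma (1 - α) := by
  have e : ∀ τ : ℝ, (s - τ) ^ (-α) * (τ - r) ^ (α - 1)
      = (fun u : ℝ => ((s - r) - u) ^ (-α) * u ^ (α - 1)) (τ - r) := by
    intro τ; simp
  constructor
  · have := (beta_intble hα (sub_pos.2 hrs)).comp_sub_right r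
    simp only [zero_add, sub_add_cancel] at this
    simpa using this
  · rw [intervalIntegral.integral_congr (fun τ _ => e τ),
      intervalIntegral.integral_comp_sub_right (fun u : ℝ => ((s - r) - u) ^ (-α) * u ^ (α - 1)) r, sub_self, beta_int hα (sub_pos.2 hrs)]

lemma bker_int {α : ℝ} (hα : α ∈ Ioo (0:ℝ) 1) {s r : ℝ} (hr : 0 ≤ r) (hrs : r < s) :
    IntegrableOn (fun τ => bker α s τ r) (Ioc 0 s) ∧
    ∫ τ in Ioc 0 s, bker α s τ r = Real.Gamma α * Real.Gamma (1 - α) := by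
  obtain ⟨h1, h2⟩ := bker_shift hα hrs
  have e : Ioc 0 s ∩ Ioi r = Ioc r s := by
    ext τ; simp only [mem_inter_iff, mem_Ioc, mem_Ioi]; constructor
    · rintro ⟨⟨_, h⟩, h'⟩; exact ⟨h', h⟩
    · rintro ⟨h, h'⟩; exact ⟨⟨by linarith, h'⟩, h⟩
  rw [bker_ind]
  constructor
  · rw [IntegrableOn, integrable_indicator_iff measurableSet_Ioi, IntegrableOn,
      Measure.restrict_restrict measurableSet_Ioi, inter_comm, e]
    exact h1.1
  · rw [setIntegral_indicator measurableSet_Ioi, e, ← intervalIntegral.integral_of_le hrs.le, h2]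

lemma frac_fubini {E : Type*} [NormedAddCommGroup E] [NormedSpace ℝ E] [CompleteSpace E]
    {α : ℝ} (hα : α ∈ Ioo (0:ℝ) 1) {s : ℝ} (hs : 0 ≤ s)
    (φ : ℝ → E) (hφ : IntegrableOn φ (Ioc 0 s)) :
    ∫ τ in (0:ℝ)..s, ((s - τ) ^ (-α) : ℝ) • ∫ r in (0:ℝ)..τ, ((τ - r) ^ (α - 1) : ℝ) • φ r
      = (Real.Gamma α * Real.Gamma (1 - α)) • ∫ r in (0:ℝ)..s, φ r := by
  set c := Real.Gamma α * Real.Gamma (1 - α) with hc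
  have hae : ∀ᵐ r ∂(volume.restrict (Ioc 0 s)), 0 < r ∧ r < s := by
    have h1 : ∀ᵐ r ∂(volume : Measure ℝ), r ≠ s := by simp [ae_iff, measure_singleton]
    filter_upwards [ae_restrict_mem measurableSet_Ioc, ae_restrict_of_ae h1] with r hr h
    exact ⟨hr.1, lt_of_le_of_ne hr.2 h⟩
  have hae2 : ∀ᵐ r ∂(volume.restrict (Ioc 0 s)),
      ∫ τ in Ioc 0 s, ‖bker α s τ r • φ r‖ = c * ‖φ r‖ := by
    filter_upwards [hae] with r hr
    rw [hc, ← (bker_int hα hr.1.le hr.2).2, ← integral_mul_const]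
    refine setIntegral_congr_fun measurableSet_Ioc fun τ hτ => ?_
    rw [norm_smul, Real.norm_of_nonneg (bker_nonneg hτ.2)]
  have hint : Integrable (Function.uncurry fun τ r => bker α s τ r • φ r)
      ((volume.restrict (Ioc 0 s)).prod (volume.restrict (Ioc 0 s))) := by
    have hm : AEStronglyMeasurable (Function.uncurry fun τ r => bker α s τ r • φ r)
      ((volume.restrict (Ioc 0 s)).prod (volume.restrict (Ioc 0 s))) :=
      (bker_meas α s).aestronglyMeasurable.smul hφ.aestronglyMeasurable.comp_snd
    rw [integrable_prod_iff' hm]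
    refine ⟨?_, ?_⟩
    · filter_upwards [hae] with r hr
      exact (bker_int hα hr.1.le hr.2).1.smul_const (φ r)
    · refine (hφ.norm.const_mul c).congr ?_
      filter_upwards [hae2] with r hr
      exact hr.symm
  have hsw := integral_integral_swap hint
  have hR : ∫ r in Ioc 0 s, ∫ τ in Ioc 0 s, bker α s τ r • φ r = c • ∫ r in Ioc 0 s, φ r := by
    rw [← integral_smul]
    refine integral_congr_ae ?_
    filter_upwards [hae] with r hr
    rw [integral_smul_const, (bker_int hα hr.1.le hr.2).2]
  rw [intervalIntegral.integral_of_le hs, intervalIntegral.integral_of_le hs, ← hR, ← hsw]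
  refine setIntegral_congr_fun measurableSet_Ioc fun τ hτ => ?_
  rw [intervalIntegral.integral_of_le hτ.1.le, ← integral_smul]
  have e : (fun r => bker α s τ r • φ r)
      = (Iio τ).indicator (fun r => ((s - τ) ^ (-α) : ℝ) • ((τ - r) ^ (α - 1) : ℝ) • φ r) := by
    ext r; by_cases h : r < τ <;> simp [bker, indicator, h, mul_smul]
  have e2 : Ioc 0 s ∩ Iio τ = Ioo 0 τ := by
    ext r; simp only [mem_inter_iff, mem_Ioc, mem_Iio, mem_Ioo]; constructor
    · rintro ⟨⟨h, _⟩, h'⟩; exact ⟨h, h'⟩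
    · rintro ⟨h, h'⟩; exact ⟨⟨h, by linarith [hτ.2]⟩, h'⟩
  rw [e, setIntegral_indicator measurableSet_Iio, e2, integral_Ioc_eq_integral_Ioo]

lemma bdd_intble {E : Type*} [NormedAddCommGroup E] {T C : ℝ}
    {φ : ℝ → E} (hm : AEStronglyMeasurable φ)
    (hC : ∀ᵐ t ∂volume.restrict (Icc (0:ℝ) T), ‖φ t‖ ≤ C) :
    IntegrableOn φ (Icc 0 T) :=
  Integrable.mono' (g := fun _ => C) (by simp) hm.restrict hC

lemma caputo_phi {α T : ℝ} (hα : α ∈ Ioo (0:ℝ) 1) (hT : 0 < T) {n : ℕ}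
    (f : ℝ → Evec n → Evec n) (x₀ : Evec n) (x φ : ℝ → Evec n) (hm : Measurable φ)
    (C : ℝ) (hC : ∀ᵐ t ∂volume.restrict (Icc (0:ℝ) T), ‖φ t‖ ≤ C)
    (hx : ∀ t ∈ Icc (0:ℝ) T, x t = x₀ + RLint α φ t)
    (hcap : ∀ᵐ t ∂volume.restrict (Icc (0:ℝ) T), CapDeriv α x t = f t (x t)) :
    ∀ᵐ t ∂volume.restrict (Icc (0:ℝ) T), φ t = f t (x t) := by
  have hφ : IntegrableOn φ (Icc 0 T) := bdd_intble hm.aestronglyMeasurable hC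
  have hx0 : x 0 = x₀ := by rw [hx 0 ⟨le_rfl, hT.le⟩]; simp [RLint]
  have hG := Real.Gamma_pos_of_pos hα.1
  have hG' := Real.Gamma_pos_of_pos (s := 1 - α) (by linarith [hα.2])
  have key : ∀ s ∈ Icc (0:ℝ) T, (Real.Gamma (1 - α))⁻¹ •
      ∫ τ in (0:ℝ)..s, ((s - τ) ^ (-α) : ℝ) • (x τ - x 0) = ∫ r in (0:ℝ)..s, φ r := by
    intro s hs
    have h1 : ∫ τ in (0:ℝ)..s, ((s - τ) ^ (-α) : ℝ) • (x τ - x 0)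
        = (Real.Gamma α)⁻¹ • ∫ τ in (0:ℝ)..s, ((s - τ) ^ (-α) : ℝ) •
            ∫ r in (0:ℝ)..τ, ((τ - r) ^ (α - 1) : ℝ) • φ r := by
      rw [← intervalIntegral.integral_smul]
      apply intervalIntegral.integral_congr
      intro τ hτ
      rw [uIcc_of_le hs.1] at hτ
      simp only
      rw [hx τ ⟨hτ.1, hτ.2.trans hs.2⟩, hx0, RLint, add_sub_cancel_left, smul_comm]
    rw [h1, frac_fubini hα hs.1 φ (hφ.mono_set (Ioc_subset_Icc_self.trans (Icc_subset_Icc_right hs.2))),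
      smul_smul, smul_smul]
    have : (Real.Gamma (1 - α))⁻¹ * ((Real.Gamma α)⁻¹ * (Real.Gamma α * Real.Gamma (1 - α))) = 1 := by
      field_simp
    rw [← mul_assoc] at this
    rw [this, one_smul]
  have hii : IntervalIntegrable φ volume 0 T := by
    rw [intervalIntegrable_iff_integrableOn_Icc_of_le hT.le]; exact hφ
  have hd := hii.ae_hasDerivAt_integral
  have h0 : ∀ᵐ r ∂(volume : Measure ℝ), r ≠ 0 := by simp [ae_iff, measure_singleton]
  have h1 : ∀ᵐ r ∂(volume : Measure ℝ), r ≠ T := by simp [ae_iff, measure_singleton]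
  filter_upwards [hcap, ae_restrict_of_ae hd, ae_restrict_of_ae h0, ae_restrict_of_ae h1,
    ae_restrict_mem measurableSet_Icc] with t ht hdt h0 h1 hmem
  rw [← ht]
  rw [uIcc_of_le hT.le] at hdt
  have hd := hdt hmem 0 ⟨le_rfl, hT.le⟩
  have hnh : Icc (0:ℝ) T ∈ nhds t :=
    Icc_mem_nhds (lt_of_le_of_ne hmem.1 (Ne.symm h0)) (lt_of_le_of_ne hmem.2 h1)
  have hd2 := hd.congr_of_eventuallyEq
    (f₁ := fun s => (Real.Gamma (1 - α))⁻¹ • ∫ τ in (0:ℝ)..s, ((s - τ) ^ (-α) : ℝ) • (x τ - x 0))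
    (Filter.eventually_of_mem hnh key)
  exact hd2.deriv.symm

lemma rpow_intble {a t : ℝ} (ha : 0 < a) :
    IntervalIntegrable (fun τ : ℝ => (t - τ) ^ (a - 1)) volume 0 t := by
  have h := (intervalIntegral.intervalIntegrable_rpow' (a := 0) (b := t) (r := a - 1)
    (by linarith)).comp_sub_left t
  simp only [sub_zero, sub_self] at h
  exact h.symm

lemma rpow_integral {a t : ℝ} (ha : 0 < a) :
    ∫ τ in (0:ℝ)..t, (t - τ) ^ (a - 1) = t ^ a / a := by
  rw [intervalIntegral.integral_comp_sub_left (fun u : ℝ => u ^ (a - 1)) t, sub_self, sub_zero,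
    integral_rpow (Or.inl (by linarith))]
  simp [Real.zero_rpow ha.ne']

lemma ker_intble {E : Type*} [NormedAddCommGroup E] [NormedSpace ℝ E] {a B C t T : ℝ} (ha : 0 < a)
    (hB : 0 ≤ B) (ht : t ∈ Icc 0 T) {q : ℝ → ℝ} (hq : Measurable q)
    (hqB : ∀ s, 0 < s → |q s| ≤ B * s ^ (a - 1)) {w : ℝ → E} (hw : AEStronglyMeasurable w)
    (hwC : ∀ᵐ τ ∂volume.restrict (Icc (0:ℝ) T), ‖w τ‖ ≤ C) :
    IntervalIntegrable (fun τ => q (t - τ) • w τ) volume 0 t := by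
  have h1 : ∀ᵐ r ∂(volume : Measure ℝ), r ≠ t := by simp [ae_iff, measure_singleton]
  rw [intervalIntegrable_iff_integrableOn_Ioc_of_le ht.1]
  have hg := ((rpow_intble (t := t) ha).1.const_mul B).mul_const C
  have hm : Measurable (fun τ => q (t - τ)) := hq.comp (measurable_const.sub measurable_id)
  refine Integrable.mono' hg ?_ ?_
  · exact (hm.aestronglyMeasurable.smul hw).restrict
  · have hsub : Ioc 0 t ⊆ Icc 0 T := Ioc_subset_Icc_self.trans (Icc_subset_Icc_right ht.2)
    filter_upwards [ae_restrict_of_ae h1, ae_restrict_mem measurableSet_Ioc,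
      ae_restrict_of_ae_restrict_of_subset hsub hwC] with τ h1 hτ hC
    have hpos : 0 < t - τ := sub_pos.2 (lt_of_le_of_ne hτ.2 h1)
    rw [norm_smul, Real.norm_eq_abs]
    have := hqB _ hpos
    gcongr

lemma est_gen {E : Type*} [NormedAddCommGroup E] [NormedSpace ℝ E] {a B t T : ℝ}
    (ht : t ∈ Icc 0 T) {q : ℝ → ℝ} (hB : 0 ≤ B)
    (hqB : ∀ s, 0 < s → |q s| ≤ B * s ^ (a - 1)) {w : ℝ → E} {b : ℝ → ℝ}
    (hw : ∀ᵐ τ ∂volume.restrict (Icc (0:ℝ) T), ‖w τ‖ ≤ b τ)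
    (hint : IntervalIntegrable (fun τ => B * ((t - τ) ^ (a - 1) * b τ)) volume 0 t) :
    ‖∫ τ in (0:ℝ)..t, q (t - τ) • w τ‖ ≤ B * ∫ τ in (0:ℝ)..t, (t - τ) ^ (a - 1) * b τ := by
  rw [← intervalIntegral.integral_const_mul]
  refine intervalIntegral.norm_integral_le_of_norm_le ht.1 ?_ hint
  have h1 : ∀ᵐ r ∂(volume : Measure ℝ), r ≠ t := by simp [ae_iff, measure_singleton]
  rw [ae_restrict_iff' measurableSet_Icc] at hw
  filter_upwards [hw, h1] with τ hw h1 hτ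
  have hpos : 0 < t - τ := sub_pos.2 (lt_of_le_of_ne hτ.2 h1)
  have h2 := hqB _ hpos
  have h3 := hw ⟨hτ.1.le, hτ.2.trans ht.2⟩
  rw [norm_smul, Real.norm_eq_abs, ← mul_assoc]
  gcongr

lemma exp_int {a k t : ℝ} (ha : 0 < a) (hk : 0 < k) (ht : 0 ≤ t) :
    ∫ τ in (0:ℝ)..t, (t - τ) ^ (a - 1) * Real.exp (k * τ)
      ≤ (1 / k) ^ a * Real.Gamma a * Real.exp (k * t) := by
  have e : ∀ τ : ℝ, (t - τ) ^ (a - 1) * Real.exp (k * τ)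
      = (fun u : ℝ => Real.exp (k * t) * (u ^ (a - 1) * Real.exp (-(k * u)))) (t - τ) := by
    intro τ
    simp only
    rw [mul_left_comm, ← Real.exp_add]; ring_nf
  rw [intervalIntegral.integral_congr (fun τ _ => e τ), intervalIntegral.integral_comp_sub_left
      (fun u : ℝ => Real.exp (k * t) * (u ^ (a - 1) * Real.exp (-(k * u)))) t,
    sub_self, sub_zero, intervalIntegral.integral_const_mul,
    mul_comm _ (Real.exp (k * t)), intervalIntegral.integral_of_le ht,
    ← Real.integral_rpow_mul_exp_neg_mul_Ioi ha hk]
  refine mul_le_mul_of_nonneg_left ?_ (Real.exp_pos _).le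
  refine setIntegral_mono_set ?_ ?_ ?_
  · have := integrableOn_rpow_mul_exp_neg_mul_rpow (p := 1) (s := a - 1) (b := k) (by linarith)
      one_pos hk
    simpa using this
  · filter_upwards [ae_restrict_mem measurableSet_Ioi] with u hu
    exact mul_nonneg (Real.rpow_nonneg (le_of_lt hu) _) (Real.exp_pos _).le
  · exact Ioc_subset_Ioi_self.eventuallyLE

lemma est_exp {E : Type*} [NormedAddCommGroup E] [NormedSpace ℝ E] {a B S k t T : ℝ}
    (ha : 0 < a) (hk : 0 < k) (hS : 0 ≤ S)
    (ht : t ∈ Icc 0 T) {q : ℝ → ℝ} (hB : 0 ≤ B)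
    (hqB : ∀ s, 0 < s → |q s| ≤ B * s ^ (a - 1)) {w : ℝ → E}
    (hw : ∀ᵐ τ ∂volume.restrict (Icc (0:ℝ) T), ‖w τ‖ ≤ S * Real.exp (k * τ)) :
    ‖∫ τ in (0:ℝ)..t, q (t - τ) • w τ‖
      ≤ (B * ((1 / k) ^ a * Real.Gamma a)) * S * Real.exp (k * t) := by
  have hi : IntervalIntegrable (fun τ : ℝ => (t - τ) ^ (a - 1) * (S * Real.exp (k * τ))) volume 0 t :=
    (rpow_intble ha).mul_continuousOn (by fun_prop)
  refine (est_gen ht hB hqB hw (hi.const_mul B)).trans ?_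
  have e : ∫ τ in (0:ℝ)..t, (t - τ) ^ (a - 1) * (S * Real.exp (k * τ))
      = S * ∫ τ in (0:ℝ)..t, (t - τ) ^ (a - 1) * Real.exp (k * τ) := by
    rw [← intervalIntegral.integral_const_mul]; congr 1; ext τ; ring
  rw [e]
  calc B * (S * ∫ τ in (0:ℝ)..t, (t - τ) ^ (a - 1) * Real.exp (k * τ))
      ≤ B * (S * ((1 / k) ^ a * Real.Gamma a * Real.exp (k * t))) := by
        gcongr; exact exp_int ha hk ht.1
    _ = _ := by ring

lemma est_const {E : Type*} [NormedAddCommGroup E] [NormedSpace ℝ E] {a B M t T : ℝ}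
    (ha : 0 < a) (ht : t ∈ Icc 0 T) {q : ℝ → ℝ} (hB : 0 ≤ B)
    (hqB : ∀ s, 0 < s → |q s| ≤ B * s ^ (a - 1)) {w : ℝ → E}
    (hw : ∀ᵐ τ ∂volume.restrict (Icc (0:ℝ) T), ‖w τ‖ ≤ M) :
    ‖∫ τ in (0:ℝ)..t, q (t - τ) • w τ‖ ≤ B * (t ^ a / a * M) := by
  have h := est_gen (b := fun _ => M) ht hB hqB hw
    (((rpow_intble ha).mul_const M).const_mul B)
  rwa [intervalIntegral.integral_mul_const, rpow_integral ha] at h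

lemma exists_k {a : ℝ} (ha : 0 < a) (B : ℝ) (hB : 0 < B) :
    ∃ k > (0:ℝ), B * ((1 / k) ^ a * Real.Gamma a) = 1 / 2 := by
  have hG := Real.Gamma_pos_of_pos ha
  refine ⟨(2 * B * Real.Gamma a) ^ (1 / a), by positivity, ?_⟩
  rw [one_div ((2 * B * Real.Gamma a) ^ (1 / a)), Real.inv_rpow (by positivity),
    ← Real.rpow_mul (by positivity), one_div_mul_cancel ha.ne', Real.rpow_one]
  field_simp

lemma gronwall_iter {T A G k : ℝ} (hA : 0 ≤ A) (hG : 0 ≤ G) (hk : 0 < k) (g : ℝ → ℝ)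
    (hg : ∀ t ∈ Icc (0:ℝ) T, g t ≤ G)
    (H : ∀ S, 0 ≤ S → (∀ t ∈ Icc (0:ℝ) T, g t ≤ S * Real.exp (k * t)) →
      ∀ t ∈ Icc (0:ℝ) T, g t ≤ A + (1 / 2) * S * Real.exp (k * t)) :
    ∀ t ∈ Icc (0:ℝ) T, g t ≤ 2 * A * Real.exp (k * T) := by
  have h1 : ∀ m : ℕ, ∀ t ∈ Icc (0:ℝ) T, g t ≤ (2 * A + G * (1 / 2) ^ m) * Real.exp (k * t) := by
    intro m
    induction m with
    | zero =>
      intro t ht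
      have : 1 ≤ Real.exp (k * t) := Real.one_le_exp (mul_nonneg hk.le ht.1)
      have := hg t ht
      simp only [pow_zero, mul_one]
      nlinarith
    | succ m ih =>
      intro t ht
      have h := H _ (by positivity) ih t ht
      have : 1 ≤ Real.exp (k * t) := Real.one_le_exp (mul_nonneg hk.le ht.1)
      rw [pow_succ]
      nlinarith
  intro t ht
  have h2 : g t ≤ 2 * A * Real.exp (k * t) := by
    have hl : Filter.Tendsto (fun m : ℕ => (2 * A + G * (1 / 2) ^ m) * Real.exp (k * t)) Filter.atTop
        (nhds ((2 * A + G * 0) * Real.exp (k * t))) :=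
      ((tendsto_const_nhds).add ((tendsto_pow_atTop_nhds_zero_of_lt_one (by norm_num)
        (by norm_num)).const_mul G)).mul_const _
    have := ge_of_tendsto' hl (fun m => h1 m t ht)
    simpa using this
  refine h2.trans ?_
  have : k * t ≤ k * T := mul_le_mul_of_nonneg_left ht.2 hk.le
  gcongr

lemma lip_ftc {E : Type*} [NormedAddCommGroup E] [NormedSpace ℝ E] [CompleteSpace E]
    [MeasurableSpace E] [BorelSpace E] [SecondCountableTopology E] {T : ℝ}
    (hT : 0 < T) (y : ℝ → E) (L : NNReal) (hL : LipschitzOnWith L y (Icc 0 T)) (hy0 : y 0 = 0)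
    (hd : ∀ᵐ t ∂volume.restrict (Icc (0:ℝ) T), DifferentiableAt ℝ y t) :
    (∀ᵐ t ∂volume.restrict (Icc (0:ℝ) T), ‖deriv y t‖ ≤ L) ∧
    ∀ t ∈ Icc (0:ℝ) T, y t = ∫ τ in (0:ℝ)..t, deriv y τ := by
  have h0 : ∀ᵐ r ∂(volume : Measure ℝ), r ≠ 0 := by simp [ae_iff, measure_singleton]
  have h1 : ∀ᵐ r ∂(volume : Measure ℝ), r ≠ T := by simp [ae_iff, measure_singleton]
  have hb : ∀ᵐ t ∂volume.restrict (Icc (0:ℝ) T), ‖deriv y t‖ ≤ L := by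
    filter_upwards [ae_restrict_of_ae h0, ae_restrict_of_ae h1,
      ae_restrict_mem measurableSet_Icc] with t h0 h1 hmem
    exact norm_deriv_le_of_lipschitzOn (Icc_mem_nhds (lt_of_le_of_ne hmem.1 (Ne.symm h0))
      (lt_of_le_of_ne hmem.2 h1)) hL
  refine ⟨hb, ?_⟩
  have hm : AEStronglyMeasurable (deriv y) := (measurable_deriv y).aestronglyMeasurable
  have hi : IntegrableOn (deriv y) (Icc 0 T) := bdd_intble hm hb
  have hii : IntervalIntegrable (deriv y) volume 0 T := by
    rw [intervalIntegrable_iff_integrableOn_Icc_of_le hT.le]; exact hi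
  have hsub : ∀ s ∈ Icc (0:ℝ) T, IntervalIntegrable (deriv y) volume 0 s := by
    intro s hs
    rw [intervalIntegrable_iff_integrableOn_Icc_of_le hs.1]
    exact hi.mono_set (Icc_subset_Icc_right hs.2)
  have hLint : LipschitzOnWith L (fun s => ∫ τ in (0:ℝ)..s, deriv y τ) (Icc 0 T) := by
    apply LipschitzOnWith.of_dist_le_mul
    intro s hs r hr
    rw [dist_eq_norm, intervalIntegral.integral_interval_sub_left (hsub s hs) (hsub r hr),
      Real.dist_eq]
    apply intervalIntegral.norm_integral_le_of_norm_le_const_ae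
    rw [ae_restrict_iff' measurableSet_Icc] at hb
    filter_upwards [hb] with τ hτ hmem
    apply hτ
    have := uIoc_subset_uIcc hmem
    exact (convex_Icc (0:ℝ) T).ordConnected.uIcc_subset hr hs this
  have hac : AbsolutelyContinuousOnInterval (fun s => y s - ∫ τ in (0:ℝ)..s, deriv y τ) 0 T := by
    apply AbsolutelyContinuousOnInterval.sub
    · exact LipschitzOnWith.absolutelyContinuousOnInterval (K := L) (by rwa [uIcc_of_le hT.le])
    · exact LipschitzOnWith.absolutelyContinuousOnInterval (K := L) (by rwa [uIcc_of_le hT.le])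
  have hz : ∀ᵐ t, t ∈ uIcc 0 T → HasDerivAt (fun s => y s - ∫ τ in (0:ℝ)..s, deriv y τ) 0 t := by
    rw [ae_restrict_iff' measurableSet_Icc] at hd
    filter_upwards [hd, hii.ae_hasDerivAt_integral] with t hd hI ht
    have := (hd (by rwa [uIcc_of_le hT.le] at ht)).hasDerivAt.sub (hI ht 0 (by simp))
    rw [sub_self] at this
    exact this
  obtain ⟨C, hC⟩ := hac.const_of_ae_hasDerivAt_zero hz
  rw [uIcc_of_le hT.le] at hC
  intro t ht
  have c0 := hC 0 ⟨le_rfl, hT.le⟩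
  have ct := hC t ht
  simp only [hy0, intervalIntegral.integral_same, sub_zero] at c0
  rw [← c0] at ct
  exact sub_eq_zero.1 ct

lemma gl_rep {E : Type*} [NormedAddCommGroup E] [NormedSpace ℝ E]
    {α h T t : ℝ} (hh : 0 < h) (y ψ : ℝ → E)
    (hψ : IntegrableOn ψ (Icc 0 T)) (hy : ∀ t ∈ Icc (0:ℝ) T, y t = ∫ τ in (0:ℝ)..t, ψ τ)
    (ht : t ∈ Icc (0:ℝ) T) :
    ((h ^ (α - 1) : ℝ)) • GLdiff (1 - α) h y t = ∫ τ in (0:ℝ)..t, glK α h (t - τ) • ψ τ := by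
  have hψt : IntervalIntegrable ψ volume 0 t := by
    rw [intervalIntegrable_iff_integrableOn_Icc_of_le ht.1]
    exact hψ.mono_set (Icc_subset_Icc_right ht.2)
  have e1 : GLdiff (1 - α) h y t = ∑ j ∈ Finset.range (⌊t / h⌋₊ + 1),
      ∫ τ in (0:ℝ)..t, ((-1 : ℝ) ^ j * binomR (1 - α) j) •
        {τ : ℝ | τ ≤ t - j * h}.indicator ψ τ := by
    refine Finset.sum_congr rfl fun j hj => ?_
    have hj' : j ≤ ⌊t / h⌋₊ := Nat.lt_succ_iff.1 (Finset.mem_range.1 hj)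
    rw [Nat.le_floor_iff (div_nonneg ht.1 hh.le), le_div_iff₀ hh] at hj'
    have hjh : 0 ≤ (j:ℝ) * h := by positivity
    rw [intervalIntegral.integral_smul, intervalIntegral.integral_indicator ⟨by linarith, by linarith⟩,
      hy _ ⟨by linarith, by linarith [ht.2]⟩]
  rw [e1, ← intervalIntegral.integral_finsetSum, ← intervalIntegral.integral_smul]
  · apply intervalIntegral.integral_congr
    intro τ hτ
    rw [uIcc_of_le ht.1] at hτ
    simp only
    rw [glK, mul_smul]
    congr 1
    rw [glA, Finset.sum_smul]
    symm
    apply Finset.sum_subset_zero_on_sdiff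
    · apply Finset.range_mono
      have : (t - τ) / h ≤ t / h := by gcongr; linarith [hτ.1]
      exact Nat.succ_le_succ (Nat.floor_mono this)
    · intro j hj
      rw [Finset.mem_sdiff, Finset.mem_range, Finset.mem_range] at hj
      have : ¬ (j ≤ ⌊(t - τ) / h⌋₊) := by omega
      rw [Nat.le_floor_iff (div_nonneg (by linarith [hτ.2]) hh.le), le_div_iff₀ hh] at this
      rw [indicator_of_notMem, smul_zero]
      simp only [mem_ofPred_eq]; intro h'; apply this; linarith
    · intro j hj
      have : j ≤ ⌊(t - τ) / h⌋₊ := Nat.lt_succ_iff.1 (Finset.mem_range.1 hj)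
      rw [Nat.le_floor_iff (div_nonneg (by linarith [hτ.2]) hh.le), le_div_iff₀ hh] at this
      rw [indicator_of_mem]
      simp only [mem_ofPred_eq]; linarith
  · intro j hj
    have hI : IntervalIntegrable ({τ : ℝ | τ ≤ t - j * h}.indicator ψ) volume 0 t := by
      rw [intervalIntegrable_iff] at hψt ⊢
      exact hψt.indicator measurableSet_Iic
    rw [intervalIntegrable_iff] at hI ⊢
    exact Integrable.smul ((-1 : ℝ) ^ j * binomR (1 - α) j) hI

theorem stmt12 (α T R₀ : ℝ) (hα : α ∈ Ioo (0:ℝ) 1) (hT : 0 < T) (hR₀ : 0 < R₀) (n : ℕ)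
    (f : ℝ → Evec n → Evec n)
    (hf1 : ∀ x : Evec n, Measurable fun t => f t x)
    (hf2 : ∀ r > (0:ℝ), ∃ lam > (0:ℝ), ∀ t ∈ Icc (0:ℝ) T, ∀ x y : Evec n,
      ‖x‖ ≤ r → ‖y‖ ≤ r → ‖f t x - f t y‖ ≤ lam * ‖x - y‖)
    (cf : ℝ) (hcf : 0 < cf)
    (hf3 : ∀ t ∈ Icc (0:ℝ) T, ∀ x : Evec n, ‖f t x‖ ≤ (1 + ‖x‖) * cf) :
    ∀ ε > (0:ℝ), ∃ hstar > (0:ℝ), ∀ x₀ : Evec n, ‖x₀‖ ≤ R₀ → ∀ h ∈ Ioc (0:ℝ) hstar,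
      ∀ x y : ℝ → Evec n, IsCaputoSol α T f x₀ x → IsApproxSol α T h f x₀ y →
      ∀ t ∈ Icc (0:ℝ) T,
        ‖x t - x₀ - ((h ^ (α - 1) : ℝ)) • GLdiff (1 - α) h y t‖ ≤ ε := by
  have hα0 := hα.1
  have hG := Real.Gamma_pos_of_pos hα0
  set γ := Real.Gamma α with hγ
  set B := (γ + 2) / γ with hBdef
  have hB : 0 < B := by positivity
  obtain ⟨k₁, hk₁, hk₁'⟩ := exists_k hα0 (B * cf) (by positivity)
  set N := 2 * (1 + R₀) * Real.exp (k₁ * T) with hN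
  have hNpos : 0 < N := by positivity
  obtain ⟨lam, hlam, hlip⟩ := hf2 N hNpos
  obtain ⟨k₂, hk₂, hk₂'⟩ := exists_k hα0 (γ⁻¹ * lam) (by positivity)
  intro ε hε
  set D := 2 * ((γ + 4) / γ * (T ^ (α / 2) / (α / 2) * (N * cf))) * Real.exp (k₂ * T) with hD
  have hDpos : 0 < D := by positivity
  refine ⟨(ε / D) ^ (2 / α), by positivity, ?_⟩
  intro x₀ hx₀ h hh x y hx hy t ht
  have hh0 := hh.1
  have hhD : h ^ (α / 2) * D ≤ ε := by
    have h1 : h ^ (α / 2) ≤ ((ε / D) ^ (2 / α)) ^ (α / 2) :=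
      Real.rpow_le_rpow hh0.le hh.2 (by positivity)
    rw [← Real.rpow_mul (by positivity)] at h1
    have : 2 / α * (α / 2) = 1 := by field_simp
    rw [this, Real.rpow_one, le_div_iff₀ hDpos] at h1
    exact h1
  obtain ⟨⟨φ, hφm, ⟨C, hC⟩, hxφ⟩, hcap⟩ := hx
  have hφf := caputo_phi hα hT f x₀ x φ hφm C hC hxφ hcap
  obtain ⟨⟨L, hL⟩, hy0, hyd⟩ := hy
  obtain ⟨hψb, hyψ⟩ := lip_ftc hT y L hL hy0 (hyd.mono fun t h => h.differentiableAt)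
  set ψ := deriv y with hψdef
  have hψm : AEStronglyMeasurable ψ := (measurable_deriv y).aestronglyMeasurable
  set z : ℝ → Evec n := fun t => ((h ^ (α - 1) : ℝ)) • GLdiff (1 - α) h y t with hz
  have hψf : ∀ᵐ t ∂volume.restrict (Icc (0:ℝ) T), ψ t = f t (x₀ + z t) := by
    filter_upwards [hyd] with t h using h.deriv
  have hzr : ∀ t ∈ Icc (0:ℝ) T, z t = ∫ τ in (0:ℝ)..t, glK α h (t - τ) • ψ τ :=
    fun t ht => gl_rep hh0 y ψ (bdd_intble hψm hψb) hyψ ht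
  set q₀ : ℝ → ℝ := fun s => γ⁻¹ * s ^ (α - 1) with hq₀
  have hq₀m : Measurable q₀ := by fun_prop
  have hq₀b : ∀ s, 0 < s → |q₀ s| ≤ γ⁻¹ * s ^ (α - 1) := fun s hs => by
    rw [abs_of_pos (by positivity)]
  have hq₀b' : ∀ s, 0 < s → |q₀ s| ≤ B * s ^ (α - 1) := fun s hs => by
    refine (hq₀b s hs).trans ?_
    gcongr
    rw [hBdef, inv_eq_one_div]; gcongr; linarith
  have hqb : ∀ s, 0 < s → |glK α h s| ≤ B * s ^ (α - 1) := fun s hs => glK_bound hα hh0 hs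
  have hxr : ∀ t ∈ Icc (0:ℝ) T, x t = x₀ + ∫ τ in (0:ℝ)..t, q₀ (t - τ) • φ τ := by
    intro t ht
    rw [hxφ t ht, RLint, ← intervalIntegral.integral_smul]
    simp only [hq₀, mul_smul, hγ]
  -- a priori bounds
  have apri : ∀ (q : ℝ → ℝ) (w v : ℝ → Evec n) (Cw : ℝ),
      (∀ s, 0 < s → |q s| ≤ B * s ^ (α - 1)) →
      (∀ᵐ t ∂volume.restrict (Icc (0:ℝ) T), ‖w t‖ ≤ Cw) →
      (∀ᵐ t ∂volume.restrict (Icc (0:ℝ) T), w t = f t (v t)) →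
      (∀ t ∈ Icc (0:ℝ) T, v t = x₀ + ∫ τ in (0:ℝ)..t, q (t - τ) • w τ) →
      ∀ t ∈ Icc (0:ℝ) T, 1 + ‖v t‖ ≤ N := by
    intro q w v Cw hq hwC hwf hv
    have hwC' : ∀ᵐ t ∂volume.restrict (Icc (0:ℝ) T), ‖w t‖ ≤ |Cw| :=
      hwC.mono fun t h => h.trans (le_abs_self _)
    have hvn : ∀ t ∈ Icc (0:ℝ) T, 1 + ‖v t‖ ≤ (1 + R₀) + ‖∫ τ in (0:ℝ)..t, q (t - τ) • w τ‖ := by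
      intro t ht
      rw [hv t ht]
      linarith [norm_add_le x₀ (∫ τ in (0:ℝ)..t, q (t - τ) • w τ)]
    refine gronwall_iter (G := (1 + R₀) + B * (T ^ α / α * |Cw|)) (by positivity) (by positivity)
      hk₁ _ ?_ ?_
    · intro t ht
      refine (hvn t ht).trans ?_
      gcongr
      refine (est_const hα0 ht hB.le hq hwC').trans ?_
      have := Real.rpow_le_rpow ht.1 ht.2 hα0.le
      gcongr
    · intro S hS hvS t ht
      refine (hvn t ht).trans ?_
      have hw : ∀ᵐ τ ∂volume.restrict (Icc (0:ℝ) T), ‖w τ‖ ≤ (cf * S) * Real.exp (k₁ * τ) := by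
        filter_upwards [hwf, ae_restrict_mem measurableSet_Icc] with τ h1 h2
        rw [h1]
        refine (hf3 τ h2 _).trans ?_
        have := hvS τ h2
        nlinarith
      have := est_exp hα0 hk₁ (by positivity) ht hB.le hq hw
      rw [← hk₁']
      refine (add_le_add_right this _).trans (le_of_eq ?_)
      ring
  have hxN := apri q₀ φ x C hq₀b' hC hφf hxr
  have hzN := apri (glK α h) ψ (fun t => x₀ + z t) L hqb hψb hψf
    (fun t ht => by rw [hzr t ht])
  -- error equation
  have hψM : ∀ᵐ t ∂volume.restrict (Icc (0:ℝ) T), ‖ψ t‖ ≤ N * cf := by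
    filter_upwards [hψf, ae_restrict_mem measurableSet_Icc] with τ h1 h2
    rw [h1]
    refine (hf3 τ h2 _).trans ?_
    have := hzN τ h2
    gcongr
  set e : ℝ → Evec n := fun t => x t - x₀ - z t with he
  have her : ∀ t ∈ Icc (0:ℝ) T, e t = (∫ τ in (0:ℝ)..t, q₀ (t - τ) • (φ τ - ψ τ))
      + ∫ τ in (0:ℝ)..t, (fun s => q₀ s - glK α h s) (t - τ) • ψ τ := by
    intro t ht
    have i1 := ker_intble hα0 hB.le ht hq₀m hq₀b' hφm.aestronglyMeasurable hC
    have i2 := ker_intble hα0 hB.le ht hq₀m hq₀b' hψm hψb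
    have i3 := ker_intble hα0 hB.le ht (glK_meas α h) hqb hψm hψb
    simp only [smul_sub, sub_smul]
    rw [intervalIntegral.integral_sub i1 i2, intervalIntegral.integral_sub i2 i3]
    simp only [he]
    rw [hxr t ht, hzr t ht]
    abel
  have hdf : ∀ s, 0 < s → |(fun s => q₀ s - glK α h s) s|
      ≤ ((γ + 4) / γ * h ^ (α / 2)) * s ^ (α / 2 - 1) := fun s hs => glK_diff hα hh0 hs
  set A := (γ + 4) / γ * h ^ (α / 2) * (T ^ (α / 2) / (α / 2) * (N * cf)) with hA
  have hfin : ∀ t ∈ Icc (0:ℝ) T, ‖e t‖ ≤ 2 * A * Real.exp (k₂ * T) := by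
    have hse : ∀ t ∈ Icc (0:ℝ) T, ‖e t‖ ≤ ‖∫ τ in (0:ℝ)..t, q₀ (t - τ) • (φ τ - ψ τ)‖ + A := by
      intro t ht
      rw [her t ht]
      refine (norm_add_le _ _).trans ?_
      gcongr
      refine (est_const (by positivity) ht (by positivity) hdf hψM).trans ?_
      have := Real.rpow_le_rpow ht.1 ht.2 (by positivity : 0 ≤ α / 2)
      rw [hA]
      gcongr
    have hdlt : ∀ᵐ τ ∂volume.restrict (Icc (0:ℝ) T), ‖φ τ - ψ τ‖ ≤ lam * ‖e τ‖ := by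
      filter_upwards [hφf, hψf, ae_restrict_mem measurableSet_Icc] with τ h1 h2 h3
      rw [h1, h2]
      refine (hlip τ h3 _ _ (by linarith [hxN τ h3]) (by linarith [hzN τ h3])).trans (le_of_eq ?_)
      simp only [he, sub_sub]
    refine gronwall_iter (G := N + N + R₀) (by positivity) (by positivity) hk₂ _ ?_ ?_
    · intro t ht
      have h1 := hxN t ht
      have h2 := hzN t ht
      have h3 : e t = x t - (x₀ + z t) := by simp only [he, sub_sub]
      rw [h3]
      linarith [norm_sub_le (x t) (x₀ + z t)]
    · intro S hS hvS t ht
      refine (hse t ht).trans ?_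
      have hw : ∀ᵐ τ ∂volume.restrict (Icc (0:ℝ) T), ‖φ τ - ψ τ‖ ≤ (lam * S) * Real.exp (k₂ * τ) := by
        filter_upwards [hdlt, ae_restrict_mem measurableSet_Icc] with τ h1 h2
        have := hvS τ h2
        nlinarith
      have := est_exp hα0 hk₂ (by positivity) ht (by positivity) hq₀b hw
      rw [← hk₂', add_comm]
      refine (add_le_add_right this _).trans (le_of_eq ?_)
      ring
  refine (hfin t ht).trans (le_trans (le_of_eq ?_) hhD)
  rw [hA, hD]; ring
end
end

section
/- Let V : [0,T] → ℝ be nonnegative with V ∈ I^α(L^∞([0,T],ℝ)), and suppose (D^α V)(t) ≤ 2λ V(t) + η for almost every t ∈ [0,T], where λ, η > 0. Then V(t) ≤ η T^α E_α(2λ T^α)/Γ(α+1) for all t ∈ [0,T], where E_α is the Mittag-Leffler function. -/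
open MeasureTheory Set Real RealInnerProductSpace

noncomputable section

lemma aux_beta {s t a : ℝ} (hs : 0 < s) (ht : 0 < t) (ha : 0 < a) :
    ∫ x in (0:ℝ)..a, x ^ (s - 1) * (a - x) ^ (t - 1)
      = a ^ (s + t - 1) * (Real.Gamma s * Real.Gamma t / Real.Gamma (s + t)) := by
  have h := Complex.betaIntegral_scaled (s : ℂ) (t : ℂ) ha
  rw [Complex.betaIntegral_eq_Gamma_mul_div _ _ (by simpa) (by simpa)] at h
  rw [← Complex.ofReal_add, Complex.Gamma_ofReal, Complex.Gamma_ofReal, Complex.Gamma_ofReal] at h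
  have h2 : ∫ x in (0:ℝ)..a, (x : ℂ) ^ ((s : ℂ) - 1) * ((a : ℂ) - x) ^ ((t : ℂ) - 1)
      = ∫ x in (0:ℝ)..a, ((x ^ (s - 1) * (a - x) ^ (t - 1) : ℝ) : ℂ) := by
    apply intervalIntegral.integral_congr
    intro x hx
    rw [uIcc_of_le ha.le] at hx
    simp only []
    rw [Complex.ofReal_mul, Complex.ofReal_cpow hx.1, Complex.ofReal_cpow (by linarith [hx.2])]
    push_cast
    rfl
  rw [h2, intervalIntegral.integral_ofReal] at h
  have h3 : ((a : ℂ) ^ (((s + t : ℝ) : ℂ) - 1)) = ((a ^ (s + t - 1) : ℝ) : ℂ) := by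
    rw [Complex.ofReal_cpow ha.le]; push_cast; rfl
  rw [h3] at h
  exact_mod_cast h

lemma aux_kint {a : ℝ} (ha : 0 < a) (t : ℝ) :
    IntervalIntegrable (fun τ : ℝ => (t - τ) ^ (a - 1)) volume 0 t := by
  have h := (intervalIntegral.intervalIntegrable_rpow' (a := 0) (b := t) (r := a - 1)
    (by linarith)).comp_sub_left t
  simpa using h.symm

lemma aux_kval {a : ℝ} (ha : 0 < a) (t : ℝ) :
    ∫ τ in (0:ℝ)..t, (t - τ) ^ (a - 1) = t ^ a / a := by
  rw [intervalIntegral.integral_comp_sub_left (fun x => x ^ (a - 1)) t,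
    integral_rpow (Or.inl (by linarith))]
  simp [Real.zero_rpow ha.ne']

lemma aux_kbdd {a : ℝ} (ha : 0 < a) {t : ℝ} (ht : 0 ≤ t) {f : ℝ → ℝ} {C : ℝ}
    (hf : AEStronglyMeasurable f (volume.restrict (Ioc 0 t)))
    (hC : ∀ τ ∈ Ioc 0 t, |f τ| ≤ C) :
    IntervalIntegrable (fun τ : ℝ => (t - τ) ^ (a - 1) * f τ) volume 0 t := by
  have h := aux_kint ha t
  rw [intervalIntegrable_iff_integrableOn_Ioc_of_le ht] at h ⊢
  refine Integrable.mul_bdd (c := C) h hf ?_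
  exact (ae_restrict_iff' measurableSet_Ioc).2 (Filter.Eventually.of_forall fun x hx => hC x hx)

lemma aux_gamma_lb {R x : ℝ} (hR : 0 < R) (hx : 0 ≤ x) :
    R ^ x * Real.exp (-R) ≤ Real.Gamma (x + 1) := by
  rw [Real.Gamma_eq_integral (by linarith)]
  have hint := Real.GammaIntegral_convergent (s := x + 1) (by linarith)
  calc R ^ x * Real.exp (-R) = ∫ u in Ioi R, R ^ x * Real.exp (-u) := by
        rw [integral_const_mul, integral_exp_neg_Ioi]
    _ ≤ ∫ u in Ioi R, Real.exp (-u) * u ^ (x + 1 - 1) := by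
        refine setIntegral_mono_on ((integrableOn_exp_neg_Ioi R).const_mul _)
          (hint.mono_set (Ioi_subset_Ioi hR.le)) measurableSet_Ioi ?_
        intro u hu
        rw [mul_comm, add_sub_cancel_right]
        have hu' : R < u := hu
        gcongr
    _ ≤ _ := by
        refine setIntegral_mono_set hint ?_ (Ioi_subset_Ioi hR.le).eventuallyLE
        refine (ae_restrict_iff' measurableSet_Ioi).2 (Filter.Eventually.of_forall fun u hu => ?_)
        have hu' : 0 < u := hu
        simp only [Pi.zero_apply]
        positivity

lemma aux_summable {α z : ℝ} (hα : 0 < α) (hz : 0 < z) :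
    Summable (fun k : ℕ => z ^ k / Real.Gamma (α * (k : ℝ) + 1)) := by
  set R : ℝ := (2 * z) ^ (1 / α) with hR
  have hRpos : 0 < R := by positivity
  have hRα : R ^ α = 2 * z := by
    rw [hR, ← Real.rpow_mul (by positivity), one_div, inv_mul_cancel₀ hα.ne', Real.rpow_one]
  refine Summable.of_nonneg_of_le (f := fun k : ℕ => Real.exp R * (1 / 2 : ℝ) ^ k) ?_ ?_ ?_
  · intro k
    have : 0 < Real.Gamma (α * (k : ℝ) + 1) := Real.Gamma_pos_of_pos (by positivity)
    positivity
  · intro k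
    have hG : 0 < Real.Gamma (α * (k : ℝ) + 1) := Real.Gamma_pos_of_pos (by positivity)
    have h := aux_gamma_lb hRpos (x := α * k) (by positivity)
    rw [Real.rpow_mul hRpos.le, hRα, Real.rpow_natCast] at h
    rw [div_le_iff₀ hG]
    calc z ^ k = Real.exp R * (1 / 2 : ℝ) ^ k * ((2 * z) ^ k * Real.exp (-R)) := by
          rw [Real.exp_neg, mul_pow]; field_simp
          rw [← mul_pow]; norm_num
      _ ≤ _ := by gcongr
  · exact (summable_geometric_of_lt_one (by norm_num) (by norm_num)).mul_left _

lemma aux_pow {α β t : ℝ} (hα : 0 < α) (hβ : 0 ≤ β) (ht : 0 ≤ t) :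
    RLint α (fun τ : ℝ => τ ^ β) t
      = Real.Gamma (β + 1) / Real.Gamma (α + β + 1) * t ^ (α + β) := by
  rcases ht.eq_or_lt with rfl | ht
  · simp [RLint, Real.zero_rpow (by linarith : α + β ≠ 0)]
  have h := aux_beta (s := β + 1) (t := α) (by linarith) hα ht
  have hG := (Real.Gamma_pos_of_pos hα).ne'
  unfold RLint
  simp only [smul_eq_mul]
  rw [show (fun τ : ℝ => (t - τ) ^ (α - 1) * τ ^ β)
    = fun τ => τ ^ (β + 1 - 1) * (t - τ) ^ (α - 1) by ext; rw [add_sub_cancel_right, mul_comm], h,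
    show β + 1 + α - 1 = α + β by ring, show β + 1 + α = α + β + 1 by ring]
  field_simp

lemma aux_fub {α C s : ℝ} (hα : α ∈ Ioo (0:ℝ) 1) (hs : 0 ≤ s) {φ : ℝ → ℝ} (hφ : Measurable φ)
    (hC : ∀ τ, |φ τ| ≤ C) :
    ∫ r in (0:ℝ)..s, (s - r) ^ (-α) * ∫ τ in (0:ℝ)..r, (r - τ) ^ (α - 1) * φ τ
      = Real.Gamma α * Real.Gamma (1 - α) * ∫ τ in (0:ℝ)..s, φ τ := by
  have hC0 : 0 ≤ C := (abs_nonneg _).trans (hC 0)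
  set F : ℝ → ℝ → ℝ := fun r τ => if 0 < τ ∧ τ < r ∧ r < s then
    (s - r) ^ (-α) * ((r - τ) ^ (α - 1) * φ τ) else 0 with hF
  have hFm : StronglyMeasurable (Function.uncurry F) := by
    apply Measurable.stronglyMeasurable
    refine Measurable.ite ?_ ?_ measurable_const
    · refine MeasurableSet.inter (measurableSet_lt measurable_const measurable_snd)
        (MeasurableSet.inter (measurableSet_lt measurable_snd measurable_fst)
          (measurableSet_lt measurable_fst measurable_const))
    · fun_prop
  have hFr : ∀ r ∈ Ioo 0 s, F r = (Ioo 0 r).indicator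
      (fun τ => (s - r) ^ (-α) * ((r - τ) ^ (α - 1) * φ τ)) := by
    intro r hr
    ext τ
    simp only [hF, indicator, mem_Ioo, hr.2, and_true]
  have hFr0 : ∀ r, r ∉ Ioo 0 s → F r = fun _ => 0 := by
    intro r hr
    ext τ
    simp only [hF]
    rw [if_neg]
    rintro ⟨h1, h2, h3⟩
    exact hr ⟨h1.trans h2, h3⟩
  have hFt : ∀ τ ∈ Ioo 0 s, (fun r => F r τ) = (Ioo τ s).indicator
      (fun r => (s - r) ^ (-α) * ((r - τ) ^ (α - 1) * φ τ)) := by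
    intro τ hr
    ext r
    simp only [hF, indicator, mem_Ioo, hr.1, true_and]
  have hFt0 : ∀ τ, τ ∉ Ioo 0 s → (fun r => F r τ) = fun _ => 0 := by
    intro τ hr
    ext r
    simp only [hF]
    rw [if_neg]
    rintro ⟨h1, h2, h3⟩
    exact hr ⟨h1, h2.trans h3⟩
  have hI1 : ∀ r, Integrable (F r) := by
    intro r
    by_cases hr : r ∈ Ioo 0 s
    · rw [hFr r hr, integrable_indicator_iff measurableSet_Ioo]
      have := (aux_kbdd hα.1 hr.1.le (f := φ) (C := C) hφ.aestronglyMeasurable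
        (fun τ _ => hC τ)).const_mul ((s - r) ^ (-α))
      rwa [intervalIntegrable_iff_integrableOn_Ioo_of_le hr.1.le] at this
    · rw [hFr0 r hr]; exact integrable_zero _ _ _
  have hI : Integrable (Function.uncurry F) (volume.prod volume) := by
    rw [integrable_prod_iff hFm.aestronglyMeasurable]
    refine ⟨Filter.Eventually.of_forall fun r => hI1 r, ?_⟩
    have hk := (aux_kint (a := 1 - α) (by linarith [hα.2]) s).mul_const (C * (s ^ α / α))
    rw [intervalIntegrable_iff_integrableOn_Ioo_of_le hs,
      ← integrable_indicator_iff measurableSet_Ioo] at hk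
    refine hk.mono' (hFm.norm.integral_prod_right').aestronglyMeasurable
      (Filter.Eventually.of_forall fun r => ?_)
    simp only [Function.uncurry]
    rw [Real.norm_of_nonneg (by positivity)]
    by_cases hr : r ∈ Ioo 0 s
    · rw [indicator_of_mem hr, hFr r hr]
      have hsr : 0 < s - r := by linarith [hr.2]
      have e1 : ∫ y, ‖(Ioo 0 r).indicator
          (fun τ => (s - r) ^ (-α) * ((r - τ) ^ (α - 1) * φ τ)) y‖
          ≤ ∫ y, (Ioo 0 r).indicator (fun τ => (s - r) ^ (-α) * ((r - τ) ^ (α - 1) * C)) y := by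
        refine integral_mono ?_ ?_ ?_
        · rw [← hFr r hr]; exact (hI1 r).norm
        · rw [integrable_indicator_iff measurableSet_Ioo]
          have := ((aux_kint hα.1 r).mul_const C).const_mul ((s - r) ^ (-α))
          rwa [intervalIntegrable_iff_integrableOn_Ioo_of_le hr.1.le] at this
        · intro y
          simp only [norm_indicator_eq_indicator_norm]
          by_cases hy : y ∈ Ioo 0 r
          swap
          · rw [indicator_of_notMem hy, indicator_of_notMem hy]
          rw [indicator_of_mem hy, indicator_of_mem hy]
          have : 0 < r - y := by linarith [hy.2]
          rw [norm_mul, norm_mul, Real.norm_of_nonneg (by positivity),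
            Real.norm_of_nonneg (by positivity), Real.norm_eq_abs]
          gcongr
          exact hC y
      refine e1.trans ?_
      rw [integral_indicator measurableSet_Ioo, ← integral_Ioc_eq_integral_Ioo,
        ← intervalIntegral.integral_of_le hr.1.le, intervalIntegral.integral_const_mul,
        intervalIntegral.integral_mul_const, aux_kval hα.1,
        show 1 - α - 1 = -α by ring, mul_comm C]
      have := hr.1; have := hr.2; have := hα.1
      gcongr
    · rw [indicator_of_notMem hr, hFr0 r hr]; simp
  have hswap := integral_integral_swap hI
  have hL : ∀ r, ∫ τ, F r τ = (Ioo 0 s).indicator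
      (fun r => (s - r) ^ (-α) * ∫ τ in (0:ℝ)..r, (r - τ) ^ (α - 1) * φ τ) r := by
    intro r
    by_cases hr : r ∈ Ioo 0 s
    · rw [indicator_of_mem hr, hFr r hr, integral_indicator measurableSet_Ioo,
        ← integral_Ioc_eq_integral_Ioo,
        ← intervalIntegral.integral_of_le hr.1.le, intervalIntegral.integral_const_mul]
    · rw [indicator_of_notMem hr, hFr0 r hr]; simp
  have hR : ∀ τ, ∫ r, F r τ = (Ioo 0 s).indicator
      (fun τ => Real.Gamma α * Real.Gamma (1 - α) * φ τ) τ := by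
    intro τ
    by_cases hr : τ ∈ Ioo 0 s
    · rw [indicator_of_mem hr, hFt τ hr, integral_indicator measurableSet_Ioo,
        ← integral_Ioc_eq_integral_Ioo,
        ← intervalIntegral.integral_of_le hr.2.le]
      have hb := aux_beta (s := α) (t := 1 - α) (a := s - τ) hα.1 (by linarith [hα.2])
        (by linarith [hr.2])
      have ht := intervalIntegral.integral_comp_sub_right (a := τ) (b := s)
        (fun x => x ^ (α - 1) * (s - τ - x) ^ (1 - α - 1)) τ
      rw [sub_self, hb] at ht
      simp only [add_sub_cancel, sub_self, Real.rpow_zero, Real.Gamma_one, one_mul, div_one] at ht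
      rw [← ht, ← intervalIntegral.integral_mul_const]
      apply intervalIntegral.integral_congr
      intro x _
      simp only []
      rw [show s - τ - (x - τ) = s - x by ring, show 1 - α - 1 = -α by ring]
      ring
    · rw [indicator_of_notMem hr, hFt0 τ hr]; simp
  simp only [hL, hR] at hswap
  rw [integral_indicator measurableSet_Ioo, integral_indicator measurableSet_Ioo,
    ← integral_Ioc_eq_integral_Ioo, ← integral_Ioc_eq_integral_Ioo,
    ← intervalIntegral.integral_of_le hs, ← intervalIntegral.integral_of_le hs,
    intervalIntegral.integral_const_mul] at hswap
  exact hswap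

lemma aux_meas {α : ℝ} {φ : ℝ → ℝ} (hφ : Measurable φ) :
    AEStronglyMeasurable (RLint α φ) (volume.restrict (Ici (0:ℝ))) := by
  set F : ℝ → ℝ → ℝ := fun r τ => if 0 < τ ∧ τ ≤ r then (r - τ) ^ (α - 1) * φ τ else 0 with hF
  have hFm : StronglyMeasurable (Function.uncurry F) := by
    apply Measurable.stronglyMeasurable
    refine Measurable.ite ?_ ?_ measurable_const
    · exact MeasurableSet.inter (measurableSet_lt measurable_const measurable_snd)
        (measurableSet_le measurable_snd measurable_fst)
    · fun_prop
  have h := (hFm.integral_prod_right (ν := volume)).const_mul (Real.Gamma α)⁻¹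
  refine h.aestronglyMeasurable.congr ?_
  refine (ae_restrict_iff' measurableSet_Ici).2 (Filter.Eventually.of_forall fun r hr => ?_)
  have hr' : 0 ≤ r := hr
  unfold RLint
  simp only [smul_eq_mul]
  rw [intervalIntegral.integral_of_le hr', ← integral_indicator measurableSet_Ioc]
  congr 2
  ext τ
  simp only [hF, indicator, mem_Ioc]

lemma aux_mono {α t : ℝ} (hα : 0 < α) (ht : 0 ≤ t) {f g : ℝ → ℝ}
    (hf : IntervalIntegrable (fun τ : ℝ => (t - τ) ^ (α - 1) * f τ) volume 0 t)
    (hg : IntervalIntegrable (fun τ : ℝ => (t - τ) ^ (α - 1) * g τ) volume 0 t)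
    (h : ∀ᵐ τ ∂volume.restrict (Icc 0 t), f τ ≤ g τ) : RLint α f t ≤ RLint α g t := by
  unfold RLint
  simp only [smul_eq_mul]
  have := Real.Gamma_pos_of_pos hα
  refine mul_le_mul_of_nonneg_left ?_ (by positivity)
  refine intervalIntegral.integral_mono_ae_restrict ht hf hg ?_
  have hm : ∀ᵐ τ ∂volume.restrict (Icc 0 t), τ ∈ Icc 0 t := ae_restrict_mem measurableSet_Icc
  filter_upwards [h, hm] with τ h1 h2
  have : 0 ≤ t - τ := by linarith [h2.2]
  gcongr

lemma aux_gronwall {α T a c M : ℝ} (hα : 0 < α) (hc : 0 < c) {V : ℝ → ℝ}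
    (ha : 0 ≤ a)
    (hm : AEStronglyMeasurable V (volume.restrict (Ici (0:ℝ))))
    (hM : ∀ t ∈ Icc 0 T, |V t| ≤ M)
    (hV : ∀ t ∈ Icc 0 T, V t ≤ a + c * RLint α V t) :
    ∀ t ∈ Icc 0 T, V t ≤ a * mittagLeffler α (c * T ^ α) := by
  set e : ℕ → ℝ → ℝ := fun k t => c ^ k / Real.Gamma (α * k + 1) * t ^ (α * k) with he
  have hG : ∀ k : ℕ, 0 < Real.Gamma (α * k + 1) :=
    fun k => Real.Gamma_pos_of_pos (by positivity)
  have heI : ∀ k t, 0 ≤ t → c * RLint α (e k) t = e (k + 1) t := by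
    intro k t ht
    have h1 : RLint α (e k) t
        = c ^ k / Real.Gamma (α * k + 1) * RLint α (fun τ : ℝ => τ ^ (α * k)) t := by
      simp only [RLint, he, smul_eq_mul]
      rw [← intervalIntegral.integral_const_mul, ← intervalIntegral.integral_const_mul,
        ← intervalIntegral.integral_const_mul]
      apply intervalIntegral.integral_congr
      intro τ _
      simp only []
      ring
    rw [h1, aux_pow hα (by positivity) ht]
    simp only [he]
    have := (hG k).ne'
    rw [show α * ((k + 1 : ℕ) : ℝ) = α + α * k by push_cast; ring]
    field_simp
    ring
  have hec : ∀ k, Continuous (e k) := by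
    intro k
    exact continuous_const.mul (Real.continuous_rpow_const (by positivity))
  have hii : ∀ {f : ℝ → ℝ}, Continuous f → ∀ t, 
      IntervalIntegrable (fun τ : ℝ => (t - τ) ^ (α - 1) * f τ) volume 0 t := by
    intro f hf t
    exact (aux_kint hα t).mul_continuousOn hf.continuousOn
  have key : ∀ n : ℕ, ∀ t ∈ Icc 0 T,
      V t ≤ a * (∑ k ∈ Finset.range n, e k t) + M * e n t := by
    intro n
    induction n with
    | zero =>
      intro t ht
      simpa [he] using (le_abs_self _).trans (hM t ht)
    | succ n ih =>
      intro t ht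
      have hVi : IntervalIntegrable (fun τ : ℝ => (t - τ) ^ (α - 1) * V τ) volume 0 t :=
        aux_kbdd hα ht.1 (C := M)
          (hm.mono_measure (Measure.restrict_mono (fun x hx => hx.1.le) le_rfl))
          (fun τ hτ => hM τ ⟨hτ.1.le, hτ.2.trans ht.2⟩)
      have h1 : RLint α V t
          ≤ RLint α (fun t => a * (∑ k ∈ Finset.range n, e k t) + M * e n t) t := by
        refine aux_mono hα ht.1 hVi (hii (by fun_prop) t) ?_
        refine (ae_restrict_iff' measurableSet_Icc).2 (Filter.Eventually.of_forall fun τ hτ => ?_)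
        exact ih τ ⟨hτ.1, hτ.2.trans ht.2⟩
      have h2 : c * RLint α (fun t => a * (∑ k ∈ Finset.range n, e k t) + M * e n t) t
          = a * (∑ k ∈ Finset.range n, e (k + 1) t) + M * e (n + 1) t := by
        rw [← heI n t ht.1, Finset.sum_congr rfl (fun k _ => (heI k t ht.1).symm)]
        simp only [RLint, smul_eq_mul, mul_add]
        rw [intervalIntegral.integral_add (hii (by fun_prop) t) (hii (by fun_prop) t)]
        have e1 : ∫ x in (0:ℝ)..t, (t - x) ^ (α - 1) * (a * ∑ k ∈ Finset.range n, e k x)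
            = a * ∑ k ∈ Finset.range n, ∫ x in (0:ℝ)..t, (t - x) ^ (α - 1) * e k x := by
          rw [← intervalIntegral.integral_finsetSum (fun k _ => hii (hec k) t),
            ← intervalIntegral.integral_const_mul]
          congr 1
          ext x
          rw [← Finset.mul_sum]; ring
        have e2 : ∫ x in (0:ℝ)..t, (t - x) ^ (α - 1) * (M * e n x)
            = M * ∫ x in (0:ℝ)..t, (t - x) ^ (α - 1) * e n x := by
          rw [← intervalIntegral.integral_const_mul]
          congr 1
          ext x
          ring
        rw [e1, e2, ← Finset.mul_sum, ← Finset.mul_sum]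
        ring
      have h3 := hV t ht
      have h4 := mul_le_mul_of_nonneg_left h1 hc.le
      rw [h2] at h4
      rw [Finset.sum_range_succ', mul_add]
      have h5 : e 0 t = 1 := by simp [he]
      rw [h5]
      linarith
  intro t ht
  have hT0 : 0 ≤ T := ht.1.trans ht.2
  rcases hT0.eq_or_lt with hT0 | hT0
  · subst hT0
    have ht0 : t = 0 := le_antisymm ht.2 ht.1
    subst ht0
    have h := hV 0 ht
    simp only [RLint, intervalIntegral.integral_same, smul_zero, mul_zero, add_zero] at h
    rw [Real.zero_rpow hα.ne', mul_zero, mittagLeffler, tsum_eq_single 0]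
    · simpa using h
    · intro b hb; simp [hb]
  have hs := aux_summable hα (z := c * T ^ α) (by positivity)
  have heT : ∀ k, e k T = (c * T ^ α) ^ k / Real.Gamma (α * (k : ℝ) + 1) := by
    intro k
    simp only [he]
    rw [Real.rpow_mul hT0.le, Real.rpow_natCast, mul_pow]
    ring
  have hM0 : 0 ≤ M := (abs_nonneg _).trans (hM t ht)
  have hle : ∀ n : ℕ, V t ≤ a * mittagLeffler α (c * T ^ α)
      + M * ((c * T ^ α) ^ n / Real.Gamma (α * (n : ℝ) + 1)) := by
    intro n
    have het : ∀ k, e k t ≤ e k T := by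
      intro k
      simp only [he]
      have := hG k
      have := ht.1
      have := ht.2
      gcongr
    refine (key n t ht).trans ?_
    rw [← heT n]
    have : ∑ k ∈ Finset.range n, e k t ≤ mittagLeffler α (c * T ^ α) := by
      refine (Finset.sum_le_sum fun k _ => het k).trans ?_
      simp only [heT]
      refine hs.sum_le_tsum _ (fun k _ => ?_)
      have := hG k
      positivity
    have := het n
    gcongr
  have hlim := (hs.tendsto_atTop_zero.const_mul M).const_add (a * mittagLeffler α (c * T ^ α))
  rw [mul_zero, add_zero] at hlim
  exact ge_of_tendsto' hlim hle

theorem stmt14 (α T : ℝ) (hα : α ∈ Ioo (0:ℝ) 1) (hT : 0 < T)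
    (V : ℝ → ℝ) (lam η : ℝ) (hlam : 0 < lam) (hη : 0 < η)
    (hVpos : ∀ t ∈ Icc (0:ℝ) T, 0 ≤ V t)
    (hVrep : ∃ φ : ℝ → ℝ, Measurable φ ∧
      (∃ C : ℝ, ∀ᵐ t ∂volume.restrict (Icc (0:ℝ) T), |φ t| ≤ C) ∧
      ∀ t ∈ Icc (0:ℝ) T, V t = RLint α φ t)
    (hDV : ∀ᵐ t ∂volume.restrict (Icc (0:ℝ) T),
      RLderiv α V t ≤ 2 * lam * V t + η) :
    ∀ t ∈ Icc (0:ℝ) T,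
      V t ≤ η * T ^ α * mittagLeffler α (2 * lam * T ^ α) / Real.Gamma (α + 1) := by
  obtain ⟨φ₀, hφ₀, ⟨C₀, hC₀⟩, hrep₀⟩ := hVrep
  have hα0 := hα.1
  have hα1 := hα.2
  have hG := Real.Gamma_pos_of_pos hα0
  have hG1 : 0 < Real.Gamma (1 - α) := Real.Gamma_pos_of_pos (by linarith)
  -- truncate the density
  obtain ⟨φ, C, hφ, hC, hrep⟩ : ∃ (φ : ℝ → ℝ) (C : ℝ), Measurable φ ∧ (∀ t, |φ t| ≤ C) ∧
      ∀ t ∈ Icc (0:ℝ) T, V t = RLint α φ t := by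
    refine ⟨fun t => if |φ₀ t| ≤ C₀ then φ₀ t else 0, |C₀|, ?_, ?_, ?_⟩
    · exact Measurable.ite (measurableSet_le (by fun_prop) measurable_const) hφ₀ measurable_const
    · intro t
      by_cases h : |φ₀ t| ≤ C₀
      · simp only [h, if_true]; exact h.trans (le_abs_self _)
      · simp [h]
    · intro t ht
      rw [hrep₀ t ht]
      unfold RLint
      congr 1
      rw [intervalIntegral.integral_of_le ht.1, intervalIntegral.integral_of_le ht.1]
      refine integral_congr_ae ?_
      have hC' := ae_mono (Measure.restrict_mono (μ := volume) (ν := volume)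
        (s := Ioc 0 t) (s' := Icc 0 T)
        (fun x hx => ⟨hx.1.le, hx.2.trans ht.2⟩) le_rfl) hC₀
      filter_upwards [hC'] with x hx
      simp [hx]
  have hC0 : 0 ≤ C := (abs_nonneg _).trans (hC 0)
  have hI : ∀ s ∈ Icc (0:ℝ) T, (Real.Gamma (1 - α))⁻¹ •
      ∫ τ in (0:ℝ)..s, ((s - τ) ^ (-α) : ℝ) • V τ = ∫ τ in (0:ℝ)..s, φ τ := by
    intro s hs
    have h := aux_fub hα hs.1 hφ hC
    have h2 : ∫ τ in (0:ℝ)..s, ((s - τ) ^ (-α) : ℝ) • V τ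
        = (Real.Gamma α)⁻¹ *
          ∫ r in (0:ℝ)..s, (s - r) ^ (-α) * ∫ τ in (0:ℝ)..r, (r - τ) ^ (α - 1) * φ τ := by
      rw [← intervalIntegral.integral_const_mul]
      apply intervalIntegral.integral_congr
      intro r hr
      rw [uIcc_of_le hs.1] at hr
      simp only [smul_eq_mul]
      rw [hrep r ⟨hr.1, hr.2.trans hs.2⟩]
      simp only [RLint, smul_eq_mul]
      ring
    rw [h2, h, smul_eq_mul]
    field_simp
  have hφli : LocallyIntegrable φ volume := by
    refine (locallyIntegrable_const C).mono hφ.aestronglyMeasurable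
      (Filter.Eventually.of_forall fun x => ?_)
    rw [Real.norm_eq_abs, Real.norm_eq_abs]
    exact (hC x).trans (le_abs_self _)
  have hder : ∀ᵐ t ∂volume.restrict (Icc (0:ℝ) T), φ t ≤ 2 * lam * V t + η := by
    have h1 := ae_restrict_of_ae (s := Icc (0:ℝ) T) (LocallyIntegrable.ae_hasDerivAt_integral hφli)
    have h2 : ∀ᵐ t ∂volume.restrict (Icc (0:ℝ) T), t ∈ Ioo 0 T := by
      rw [← Measure.restrict_congr_set (Ioo_ae_eq_Icc (μ := volume) (a := (0:ℝ)) (b := T))]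
      exact ae_restrict_mem measurableSet_Ioo
    filter_upwards [h1, h2, hDV] with t h1 h2 h3
    have h4 : RLderiv α V t = φ t := by
      unfold RLderiv
      refine HasDerivAt.deriv ((h1 0).congr_of_eventuallyEq ?_)
      filter_upwards [Icc_mem_nhds h2.1 h2.2] with s hs
      exact hI s hs
    rwa [h4] at h3
  have hVm : AEStronglyMeasurable (RLint α φ) (volume.restrict (Ici (0:ℝ))) := aux_meas hφ
  have hone : ∀ t, RLint α (fun _ => (1:ℝ)) t = t ^ α / Real.Gamma (α + 1) := by
    intro t
    simp only [RLint, smul_eq_mul, mul_one]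
    rw [aux_kval hα0, Real.Gamma_add_one hα0.ne']
    field_simp
  have hcst : ∀ (K : ℝ) t, RLint α (fun _ => K) t = K * (t ^ α / Real.Gamma (α + 1)) := by
    intro K t
    rw [← hone]
    simp only [RLint, smul_eq_mul, mul_one]
    rw [intervalIntegral.integral_mul_const]
    ring
  have hGa : 0 < Real.Gamma (α + 1) := Real.Gamma_pos_of_pos (by linarith)
  have hφi : ∀ t, 0 ≤ t → IntervalIntegrable
      (fun τ : ℝ => (t - τ) ^ (α - 1) * φ τ) volume 0 t := fun t ht =>
    aux_kbdd hα0 ht hφ.aestronglyMeasurable (fun τ _ => hC τ)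
  have hVM : ∀ t ∈ Icc 0 T, |RLint α φ t| ≤ C * (T ^ α / Real.Gamma (α + 1)) := by
    intro t ht
    rw [← hrep t ht, abs_of_nonneg (hVpos t ht), hrep t ht]
    refine (aux_mono hα0 ht.1 (hφi t ht.1) ((aux_kint hα0 t).mul_const C)
      (Filter.Eventually.of_forall fun τ => (le_abs_self _).trans (hC τ))).trans ?_
    rw [hcst]
    have := ht.1
    have := ht.2
    gcongr
  have hgr := aux_gronwall (T := T) (a := η * (T ^ α / Real.Gamma (α + 1))) (c := 2 * lam)
    hα0 (by positivity) (by positivity) hVm hVM ?_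
  · intro t ht
    rw [hrep t ht]
    refine (hgr t ht).trans (le_of_eq ?_)
    ring
  · intro t ht
    have hVi : IntervalIntegrable (fun τ : ℝ => (t - τ) ^ (α - 1) * RLint α φ τ) volume 0 t :=
      aux_kbdd hα0 ht.1 (hVm.mono_measure (Measure.restrict_mono (fun x hx => hx.1.le) le_rfl))
          (fun τ hτ => hVM τ ⟨hτ.1.le, hτ.2.trans ht.2⟩)
    have hVi2 : IntervalIntegrable
        (fun τ : ℝ => 2 * lam * ((t - τ) ^ (α - 1) * RLint α φ τ)) volume 0 t :=
      hVi.const_mul (2 * lam)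
    have hki : IntervalIntegrable (fun τ : ℝ => (t - τ) ^ (α - 1) * η) volume 0 t :=
      (aux_kint hα0 t).mul_const η
    have hfun : (fun τ : ℝ => (t - τ) ^ (α - 1) * (2 * lam * RLint α φ τ + η))
        = fun τ => 2 * lam * ((t - τ) ^ (α - 1) * RLint α φ τ) + (t - τ) ^ (α - 1) * η := by
      ext τ; ring
    have h1 : RLint α φ t ≤ RLint α (fun τ => 2 * lam * RLint α φ τ + η) t := by
      refine aux_mono hα0 ht.1 (hφi t ht.1) ?_ ?_
      · rw [hfun]; exact hVi2.add hki
      · have hd := ae_mono (Measure.restrict_mono (μ := volume) (ν := volume)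
          (s := Icc 0 t) (s' := Icc 0 T)
          (fun x hx => ⟨hx.1, hx.2.trans ht.2⟩) le_rfl) hder
        filter_upwards [hd, ae_restrict_mem measurableSet_Icc] with x hx hx2
        rwa [← hrep x ⟨hx2.1, hx2.2.trans ht.2⟩]
    have h2 : RLint α (fun τ => 2 * lam * RLint α φ τ + η) t
        = 2 * lam * RLint α (RLint α φ) t + RLint α (fun _ => η) t := by
      conv_lhs => rw [RLint]
      conv_rhs => rw [RLint, RLint.eq_1 α (fun _ => η)]
      simp only [smul_eq_mul]
      rw [hfun, intervalIntegral.integral_add hVi2 hki, intervalIntegral.integral_const_mul]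
      ring
    rw [h2, hcst] at h1
    have h3 : η * (t ^ α / Real.Gamma (α + 1)) ≤ η * (T ^ α / Real.Gamma (α + 1)) := by
      have := ht.1
      have := ht.2
      gcongr
    linarith
end
end

section
/- Let g : [0,T]×ℝⁿ×P×Q → ℝⁿ be continuous, locally Lipschitz in x uniformly in (t,u,v), with linear growth ‖g(t,x,u,v)‖ ≤ (1+‖x‖)c_g, where P ⊂ ℝ^{n_u} and Q ⊂ ℝ^{n_v} are compact. Then for every x₀ ∈ B(R₀) and all measurable realizations u : [0,T) → P, v : [0,T) → Q, there exists a unique motion x(·) ∈ {x₀}+I^α(L^∞) satisfying (^C D^α x)(t) = g(t,x(t),u(t),v(t)) a.e. Moreover there exist R̄ > 0 and H̄ > 0 independent of x₀, u(·), v(·) such that ‖x(t)‖ ≤ R̄ and ‖x(t) − x(τ)‖ ≤ H̄ |t−τ|^α for all t, τ ∈ [0,T]. -/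
open MeasureTheory Set Real RealInnerProductSpace

noncomputable section

lemma aux_ker_ii {α : ℝ} (hα : 0 < α) (t a b : ℝ) :
    IntervalIntegrable (fun τ : ℝ => (t - τ) ^ (α - 1)) volume a b := by
  have h := (intervalIntegral.intervalIntegrable_rpow' (r := α - 1) (by linarith)
    (a := t - a) (b := t - b)).comp_sub_left t
  simpa using h

lemma aux_ker_int {α : ℝ} (hα : 0 < α) (t a b : ℝ) :
    ∫ τ in a..b, (t - τ) ^ (α - 1) = ((t - a) ^ α - (t - b) ^ α) / α := by
  rw [intervalIntegral.integral_comp_sub_left (fun x => x ^ (α - 1)) t,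
    integral_rpow (Or.inl (by linarith))]
  simp

lemma aux_restrict {T : ℝ} {p : ℝ → Prop}
    (h : ∀ᵐ t ∂volume.restrict (Icc (0:ℝ) T), p t) {a b : ℝ} (ha : 0 ≤ a) (hb : b ≤ T) :
    ∀ᵐ t, t ∈ Ioc a b → p t := by
  rw [ae_restrict_iff' measurableSet_Icc] at h
  filter_upwards [h] with t ht hh
  exact ht ⟨ha.trans hh.1.le, hh.2.trans hb⟩

lemma aux_bdd_ii {E : Type*} [NormedAddCommGroup E] [NormedSpace ℝ E]
    {α T C : ℝ} (hα : 0 < α) {φ : ℝ → E} (hm : AEStronglyMeasurable φ volume)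
    (hC : ∀ᵐ t ∂volume.restrict (Icc (0:ℝ) T), ‖φ t‖ ≤ C) (t : ℝ) {a b : ℝ}
    (ha : 0 ≤ a) (hab : a ≤ b) (hb : b ≤ T) :
    IntervalIntegrable (fun τ : ℝ => ((t - τ) ^ (α - 1) : ℝ) • φ τ) volume a b := by
  have h1 := (aux_ker_ii hα t a b)
  rw [intervalIntegrable_iff_integrableOn_Ioc_of_le hab] at h1 ⊢
  refine (h1.norm.mul_const C).mono' (h1.aestronglyMeasurable.smul hm.restrict) ?_
  rw [ae_restrict_iff' measurableSet_Ioc]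
  filter_upwards [aux_restrict hC ha hb] with s hs hh
  rw [norm_smul]
  exact mul_le_mul_of_nonneg_left (hs hh) (norm_nonneg _)

lemma aux_exp_int {α k : ℝ} (hα : 0 < α) (hk : 0 < k) {t : ℝ} (ht : 0 ≤ t) :
    ∫ τ in (0:ℝ)..t, (t - τ) ^ (α - 1) * exp (k * τ) ≤ exp (k * t) * ((1 / k) ^ α * Gamma α) := by
  have e := Real.integral_rpow_mul_exp_neg_mul_Ioi hα hk
  have hi : IntegrableOn (fun t : ℝ => t ^ (α - 1) * rexp (-(k * t))) (Ioi 0) := by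
    apply Integrable.of_integral_ne_zero
    rw [e]
    have := Gamma_pos_of_pos hα
    positivity
  have h1 : ∫ τ in (0:ℝ)..t, (t - τ) ^ (α - 1) * exp (k * τ)
      = exp (k * t) * ∫ s in (0:ℝ)..t, s ^ (α - 1) * exp (-(k * s)) := by
    have := intervalIntegral.integral_comp_sub_left (a := 0) (b := t)
      (fun s => s ^ (α - 1) * exp (-(k * s))) t
    simp only [sub_self, sub_zero] at this
    rw [← this, ← intervalIntegral.integral_const_mul]
    congr 1 with s
    rw [mul_left_comm, ← Real.exp_add]
    congr 2; ring
  rw [h1, ← e]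
  apply mul_le_mul_of_nonneg_left _ (exp_pos _).le
  rw [intervalIntegral.integral_of_le ht]
  apply setIntegral_mono_set hi
  · rw [Filter.EventuallyLE, ae_restrict_iff' measurableSet_Ioi]
    filter_upwards with s hs
    have : 0 < s := hs
    simp only [Pi.zero_apply]
    positivity
  · exact Ioc_subset_Ioi_self.eventuallyLE

lemma aux_RLint_exp {E : Type*} [NormedAddCommGroup E] [NormedSpace ℝ E]
    {α k B T : ℝ} (hα : 0 < α) (hk : 0 < k) {φ : ℝ → E}
    (hB : ∀ᵐ t ∂volume.restrict (Icc (0:ℝ) T), ‖φ t‖ ≤ B * exp (k * t)) (hB0 : 0 ≤ B)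
    {t : ℝ} (ht : t ∈ Icc 0 T) :
    ‖RLint α φ t‖ ≤ B * (1 / k) ^ α * exp (k * t) := by
  have hG := Gamma_pos_of_pos hα
  have h1 : ‖∫ τ in (0:ℝ)..t, ((t - τ) ^ (α - 1) : ℝ) • φ τ‖ ≤
      ∫ τ in (0:ℝ)..t, B * ((t - τ) ^ (α - 1) * exp (k * τ)) := by
    apply intervalIntegral.norm_integral_le_of_norm_le ht.1
    · filter_upwards [aux_restrict hB le_rfl ht.2] with s hs hh
      have : 0 ≤ (t - s) ^ (α - 1) := rpow_nonneg (by linarith [hh.2]) _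
      rw [norm_smul, Real.norm_of_nonneg this, mul_left_comm]
      exact mul_le_mul_of_nonneg_left (hs hh) this
    · apply IntervalIntegrable.const_mul
      exact (aux_ker_ii hα t 0 t).mul_continuousOn (by fun_prop)
  rw [intervalIntegral.integral_const_mul] at h1
  have h2 := h1.trans (mul_le_mul_of_nonneg_left (aux_exp_int hα hk ht.1) hB0)
  rw [RLint, norm_smul, norm_inv, Real.norm_of_nonneg hG.le]
  calc _ ≤ (Gamma α)⁻¹ * (B * (rexp (k * t) * ((1 / k) ^ α * Gamma α))) := by gcongr
    _ = _ := by field_simp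

lemma aux_RLint_sub {E : Type*} [NormedAddCommGroup E] [NormedSpace ℝ E]
    {α T C D : ℝ} (hα : 0 < α) {φ ψ : ℝ → E} (hm : AEStronglyMeasurable φ volume)
    (hC : ∀ᵐ t ∂volume.restrict (Icc (0:ℝ) T), ‖φ t‖ ≤ C)
    (hm' : AEStronglyMeasurable ψ volume)
    (hD : ∀ᵐ t ∂volume.restrict (Icc (0:ℝ) T), ‖ψ t‖ ≤ D) {t : ℝ} (ht : t ∈ Icc 0 T) :
    RLint α φ t - RLint α ψ t = RLint α (fun s => φ s - ψ s) t := by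
  rw [RLint, RLint, RLint, ← smul_sub, ← intervalIntegral.integral_sub
    (aux_bdd_ii hα hm hC t le_rfl ht.1 ht.2) (aux_bdd_ii hα hm' hD t le_rfl ht.1 ht.2)]
  simp only [smul_sub]

lemma aux_holder1 {E : Type*} [NormedAddCommGroup E] [NormedSpace ℝ E]
    {α T C : ℝ} (hα : 0 < α) (hα1 : α < 1) {φ : ℝ → E} (hm : AEStronglyMeasurable φ volume)
    (hC0 : 0 ≤ C)
    (hC : ∀ᵐ t ∂volume.restrict (Icc (0:ℝ) T), ‖φ t‖ ≤ C) {t τ : ℝ} (h0 : 0 ≤ τ) (hτ : τ ≤ t)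
    (ht : t ≤ T) :
    ‖RLint α φ t - RLint α φ τ‖ ≤ (2 * C / (α * Gamma α)) * (t - τ) ^ α := by
  have hG := Gamma_pos_of_pos hα
  have e1 : RLint α φ t - RLint α φ τ = (Gamma α)⁻¹ •
      ((∫ s in (0:ℝ)..τ, (((t - s) ^ (α - 1) : ℝ) - ((τ - s) ^ (α - 1) : ℝ)) • φ s)
        + ∫ s in τ..t, ((t - s) ^ (α - 1) : ℝ) • φ s) := by
    rw [RLint, RLint, ← smul_sub, ← intervalIntegral.integral_add_adjacent_intervals
      (aux_bdd_ii hα hm hC t le_rfl h0 (hτ.trans ht)) (aux_bdd_ii hα hm hC t h0 hτ ht)]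
    simp only [sub_smul]
    rw [intervalIntegral.integral_sub (aux_bdd_ii hα hm hC t le_rfl h0 (hτ.trans ht))
      (aux_bdd_ii hα hm hC τ le_rfl h0 (hτ.trans ht))]
    congr 1; abel
  have b1 : ‖∫ s in (0:ℝ)..τ, (((t - s) ^ (α - 1) : ℝ) - ((τ - s) ^ (α - 1) : ℝ)) • φ s‖ ≤
      ∫ s in (0:ℝ)..τ, (((τ - s) ^ (α - 1) : ℝ) - ((t - s) ^ (α - 1) : ℝ)) * C := by
    apply intervalIntegral.norm_integral_le_of_norm_le h0
    · have hne : ∀ᵐ s : ℝ, s ≠ τ := by simp [ae_iff, measure_singleton]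
      filter_upwards [aux_restrict hC le_rfl (hτ.trans ht), hne] with s hs hn hh
      have hlt : s < τ := lt_of_le_of_ne hh.2 hn
      have : (t - s) ^ (α - 1) ≤ (τ - s) ^ (α - 1) :=
        rpow_le_rpow_of_nonpos (by linarith) (by linarith) (by linarith)
      rw [norm_smul, Real.norm_of_nonpos (by linarith), neg_sub]
      exact mul_le_mul_of_nonneg_left (hs hh) (by linarith)
    · exact ((aux_ker_ii hα τ 0 τ).sub (aux_ker_ii hα t 0 τ)).mul_const C
  have b2 : ‖∫ s in τ..t, ((t - s) ^ (α - 1) : ℝ) • φ s‖ ≤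
      ∫ s in τ..t, ((t - s) ^ (α - 1) : ℝ) * C := by
    apply intervalIntegral.norm_integral_le_of_norm_le hτ
    · filter_upwards [aux_restrict hC h0 ht] with s hs hh
      have : 0 ≤ (t - s) ^ (α - 1) := rpow_nonneg (by linarith [hh.2]) _
      rw [norm_smul, Real.norm_of_nonneg this]
      exact mul_le_mul_of_nonneg_left (hs hh) this
    · exact (aux_ker_ii hα t τ t).mul_const C
  rw [intervalIntegral.integral_mul_const, intervalIntegral.integral_sub (aux_ker_ii hα τ 0 τ)
    (aux_ker_ii hα t 0 τ), aux_ker_int hα, aux_ker_int hα] at b1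
  rw [intervalIntegral.integral_mul_const, aux_ker_int hα] at b2
  simp only [sub_self, sub_zero, zero_rpow hα.ne'] at b1 b2
  have hmono : τ ^ α ≤ t ^ α := rpow_le_rpow h0 hτ hα.le
  rw [e1, norm_smul, norm_inv, Real.norm_of_nonneg hG.le]
  calc _ ≤ (Gamma α)⁻¹ * ((τ ^ α / α - (t ^ α - (t - τ) ^ α) / α) * C + (t - τ) ^ α / α * C) := by
        gcongr
        exact (norm_add_le _ _).trans (add_le_add b1 b2)
    _ ≤ (Gamma α)⁻¹ * (2 * (t - τ) ^ α / α * C) := by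
        gcongr
        rw [← add_mul]
        gcongr
        rw [← sub_div, ← add_div]
        gcongr
        linarith
    _ = _ := by field_simp

lemma aux_holder {E : Type*} [NormedAddCommGroup E] [NormedSpace ℝ E]
    {α T C : ℝ} (hα : 0 < α) (hα1 : α < 1) {φ : ℝ → E} (hm : AEStronglyMeasurable φ volume)
    (hC0 : 0 ≤ C)
    (hC : ∀ᵐ t ∂volume.restrict (Icc (0:ℝ) T), ‖φ t‖ ≤ C) {t τ : ℝ} (ht : t ∈ Icc 0 T)
    (hτ : τ ∈ Icc 0 T) :
    ‖RLint α φ t - RLint α φ τ‖ ≤ (2 * C / (α * Gamma α)) * |t - τ| ^ α := by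
  rcases le_total τ t with h | h
  · rw [abs_of_nonneg (by linarith)]
    exact aux_holder1 hα hα1 hm hC0 hC hτ.1 h ht.2
  · rw [norm_sub_rev, abs_sub_comm, abs_of_nonneg (by linarith)]
    exact aux_holder1 hα hα1 hm hC0 hC ht.1 h hτ.2

lemma aux_cont {E : Type*} [NormedAddCommGroup E] [NormedSpace ℝ E]
    {α T C : ℝ} (hα : 0 < α) (hα1 : α < 1) {φ : ℝ → E} (hm : AEStronglyMeasurable φ volume)
    (hC : ∀ᵐ t ∂volume.restrict (Icc (0:ℝ) T), ‖φ t‖ ≤ C) :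
    ContinuousOn (RLint α φ) (Icc 0 T) := by
  have hC' : ∀ᵐ t ∂volume.restrict (Icc (0:ℝ) T), ‖φ t‖ ≤ |C| := by
    filter_upwards [hC] with t h using h.trans (le_abs_self _)
  intro τ hτ
  rw [ContinuousWithinAt, tendsto_iff_norm_sub_tendsto_zero]
  refine squeeze_zero' (Filter.Eventually.of_forall fun _ => norm_nonneg _)
    (eventually_nhdsWithin_of_forall fun t ht =>
      aux_holder hα hα1 hm (abs_nonneg C) hC' ht hτ) ?_
  have : ContinuousAt (fun t : ℝ => (2 * |C| / (α * Gamma α)) * |t - τ| ^ α) τ := by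
    refine continuousAt_const.mul (ContinuousAt.rpow_const (by fun_prop) (Or.inr hα.le))
  have h := this.tendsto
  simp only [sub_self, abs_zero, zero_rpow hα.ne', mul_zero] at h
  exact h.mono_left nhdsWithin_le_nhds

lemma aux_k {α c : ℝ} (hα : 0 < α) (hc : 0 < c) : ∃ k > 0, c * (1 / k) ^ α ≤ 1 / 2 := by
  refine ⟨(2 * c) ^ (1 / α), by positivity, ?_⟩
  rw [one_div ((2 * c) ^ (1 / α)), inv_rpow (by positivity), ← rpow_mul (by positivity),
    one_div_mul_cancel hα.ne', rpow_one]
  apply le_of_eq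
  field_simp

lemma aux_beta_s16 {α : ℝ} (hα : 0 < α) (hα1 : α < 1) {τ s : ℝ} (h : τ < s) :
    ∫ r in τ..s, (s - r) ^ (-α) * (r - τ) ^ (α - 1) = Gamma α * Gamma (1 - α) := by
  have ha : 0 < s - τ := by linarith
  have h1 := intervalIntegral.integral_comp_sub_right (a := τ) (b := s)
    (fun y => (s - τ - y) ^ (-α) * y ^ (α - 1)) τ
  simp only [sub_self] at h1
  have h2 : ∫ r in τ..s, (s - r) ^ (-α) * (r - τ) ^ (α - 1) =
      ∫ y in (0:ℝ)..(s - τ), (s - τ - y) ^ (-α) * y ^ (α - 1) := by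
    rw [← h1]
    congr 1 with r
    congr 2; ring
  rw [h2]
  have h3 := Complex.betaIntegral_scaled (α : ℂ) ((1 - α : ℝ) : ℂ) ha
  have h4 := Complex.Gamma_mul_Gamma_eq_betaIntegral (s := (α : ℂ)) (t := ((1 - α : ℝ) : ℂ))
    (by simpa using hα) (by simp only [Complex.ofReal_re]; linarith)
  have e0 : (α : ℂ) + ((1 - α : ℝ) : ℂ) = 1 := by push_cast; ring
  rw [e0, Complex.Gamma_one, one_mul] at h4
  rw [e0, sub_self, Complex.cpow_zero, one_mul, ← h4, Complex.Gamma_ofReal, Complex.Gamma_ofReal] at h3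
  have h5 : ∫ x in (0:ℝ)..(s - τ), (x : ℂ) ^ ((α : ℂ) - 1) * (((s - τ : ℝ) : ℂ) - x) ^ (((1 - α : ℝ) : ℂ) - 1)
      = ∫ y in (0:ℝ)..(s - τ), (((s - τ - y) ^ (-α) * y ^ (α - 1) : ℝ) : ℂ) := by
    apply intervalIntegral.integral_congr
    intro y hy
    rw [uIcc_of_le ha.le] at hy
    simp only
    rw [Complex.ofReal_mul, Complex.ofReal_cpow (by linarith [hy.2]), Complex.ofReal_cpow hy.1, mul_comm]
    push_cast
    congr 2; ring
  rw [h5, intervalIntegral.integral_ofReal] at h3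
  exact_mod_cast h3

lemma aux_ker2_ii {α : ℝ} (hα1 : α < 1) (t a b : ℝ) :
    IntervalIntegrable (fun τ : ℝ => (t - τ) ^ (-α)) volume a b := by
  have := aux_ker_ii (α := 1 - α) (by linarith) t a b
  simpa using this

lemma aux_semi {n : ℕ} {α T C : ℝ} (hα : 0 < α) (hα1 : α < 1) {φ : ℝ → Evec n}
    (hm : Measurable φ) (hC0 : 0 ≤ C)
    (hC : ∀ᵐ t ∂volume.restrict (Icc (0:ℝ) T), ‖φ t‖ ≤ C) {s : ℝ} (hs : s ∈ Icc 0 T) :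
    ∫ r in (0:ℝ)..s, ((s - r) ^ (-α) : ℝ) • (∫ τ in (0:ℝ)..r, ((r - τ) ^ (α - 1) : ℝ) • φ τ)
      = (Gamma α * Gamma (1 - α)) • ∫ τ in (0:ℝ)..s, φ τ := by
  set f : ℝ → ℝ → Evec n := fun r τ =>
    if τ ≤ r then ((s - r) ^ (-α) * (r - τ) ^ (α - 1) : ℝ) • φ τ else 0 with hf
  set μ := volume.restrict (Ioc (0:ℝ) s) with hμ
  have hmeas : Measurable (Function.uncurry f) := by
    apply Measurable.ite (measurableSet_le measurable_snd measurable_fst)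
    · have h1 : Measurable (fun p : ℝ × ℝ => (s - p.1) ^ (-α) * (p.1 - p.2) ^ (α - 1)) := by
        fun_prop
      exact h1.smul (hm.comp measurable_snd)
    · exact measurable_const
  have hind : ∀ r, f r = (Iic r).indicator
      (fun τ => ((s - r) ^ (-α) * (r - τ) ^ (α - 1) : ℝ) • φ τ) := by
    intro r; ext1 τ; simp [hf, indicator]
  have hset : ∀ r ∈ Ioc 0 s, Iic r ∩ Ioc 0 s = Ioc 0 r := by
    intro r hr; ext x; simp only [mem_inter_iff, mem_Iic, mem_Ioc] at *
    constructor
    · rintro ⟨a, b, c⟩; exact ⟨b, a⟩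
    · rintro ⟨a, b⟩; exact ⟨b, a, b.trans hr.2⟩
  have hII : ∀ r ∈ Ioc 0 s, IntegrableOn
      (fun τ => ((s - r) ^ (-α) * (r - τ) ^ (α - 1) : ℝ) • φ τ) (Ioc 0 r) := by
    intro r hr
    have := aux_bdd_ii hα hm.aestronglyMeasurable hC r le_rfl hr.1.le (hr.2.trans hs.2)
    rw [intervalIntegrable_iff_integrableOn_Ioc_of_le hr.1.le] at this
    simp only [mul_smul]
    exact this.smul ((s - r) ^ (-α))
  have hint : Integrable (Function.uncurry f) (μ.prod μ) := by
    rw [integrable_prod_iff hmeas.aestronglyMeasurable]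
    constructor
    · rw [hμ, ae_restrict_iff' measurableSet_Ioc]
      filter_upwards with r hr
      change Integrable (f r) _
      rw [hind, integrable_indicator_iff measurableSet_Iic, IntegrableOn,
        Measure.restrict_restrict measurableSet_Iic, hset r hr]
      exact hII r hr
    · have k1 := (aux_ker2_ii hα1 s 0 s).mul_const (s ^ α / α * C)
      rw [intervalIntegrable_iff_integrableOn_Ioc_of_le hs.1] at k1
      refine Integrable.mono' k1 hmeas.aestronglyMeasurable.norm.integral_prod_right' ?_
      rw [hμ, ae_restrict_iff' measurableSet_Ioc]
      filter_upwards with r hr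
      rw [Real.norm_of_nonneg (integral_nonneg fun _ => norm_nonneg _)]
      change ∫ τ, ‖f r τ‖ ∂_ ≤ _
      have hsr : 0 ≤ (s - r) ^ (-α) := rpow_nonneg (by linarith [hr.2]) _
      calc ∫ τ, ‖f r τ‖ ∂(volume.restrict (Ioc 0 s))
          = ∫ τ in Ioc 0 r, ‖((s - r) ^ (-α) * (r - τ) ^ (α - 1) : ℝ) • φ τ‖ := by
            rw [hind]
            simp only [norm_indicator_eq_indicator_norm]
            rw [integral_indicator measurableSet_Iic,
              Measure.restrict_restrict measurableSet_Iic, hset r hr]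
        _ ≤ ∫ τ in Ioc 0 r, (s - r) ^ (-α) * ((r - τ) ^ (α - 1) * C) := by
            apply setIntegral_mono_ae_restrict (hII r hr).norm
            · have := ((aux_ker_ii hα r 0 r).mul_const C).const_mul ((s - r) ^ (-α))
              rwa [intervalIntegrable_iff_integrableOn_Ioc_of_le hr.1.le] at this
            · rw [Filter.EventuallyLE, ae_restrict_iff' measurableSet_Ioc]
              filter_upwards [aux_restrict hC le_rfl (hr.2.trans hs.2)] with τ h1 h2
              have : 0 ≤ (r - τ) ^ (α - 1) := rpow_nonneg (by linarith [h2.2]) _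
              rw [norm_smul, Real.norm_of_nonneg (by positivity), mul_assoc]
              have := h1 h2
              gcongr
        _ = (s - r) ^ (-α) * (r ^ α / α * C) := by
            rw [← intervalIntegral.integral_of_le hr.1.le, intervalIntegral.integral_const_mul,
              intervalIntegral.integral_mul_const, aux_ker_int hα]
            simp [zero_rpow hα.ne']
        _ ≤ _ := by
            have := rpow_le_rpow hr.1.le hr.2 hα.le
            gcongr
  have hsw := integral_integral_swap hint
  have eL : ∫ r, ∫ τ, f r τ ∂μ ∂μ = ∫ r in (0:ℝ)..s, ((s - r) ^ (-α) : ℝ) •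
      (∫ τ in (0:ℝ)..r, ((r - τ) ^ (α - 1) : ℝ) • φ τ) := by
    rw [intervalIntegral.integral_of_le hs.1]
    apply setIntegral_congr_fun measurableSet_Ioc
    intro r hr
    simp only
    rw [hind, integral_indicator measurableSet_Iic, Measure.restrict_restrict measurableSet_Iic,
      hset r hr, intervalIntegral.integral_of_le hr.1.le]
    simp only [mul_smul]
    rw [integral_smul]
  have eR : ∫ τ, ∫ r, f r τ ∂μ ∂μ = ∫ τ in (0:ℝ)..s, (Gamma α * Gamma (1 - α)) • φ τ := by
    rw [intervalIntegral.integral_of_le hs.1]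
    apply integral_congr_ae
    have hne : ∀ᵐ τ : ℝ, τ ≠ s := by simp [ae_iff, measure_singleton]
    rw [Filter.EventuallyEq, ae_restrict_iff' measurableSet_Ioc]
    filter_upwards [hne] with τ hn hτ
    have hlt : τ < s := lt_of_le_of_ne hτ.2 hn
    have e1 : (fun r => f r τ) = (Ici τ).indicator
      (fun r => ((s - r) ^ (-α) * (r - τ) ^ (α - 1) : ℝ) • φ τ) := by
      ext1 r; simp [hf, indicator]
    have e2 : Ici τ ∩ Ioc 0 s = Icc τ s := by
      ext x; simp only [mem_inter_iff, mem_Ici, mem_Ioc, mem_Icc]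
      constructor
      · rintro ⟨a, b, c⟩; exact ⟨a, c⟩
      · rintro ⟨a, b⟩; exact ⟨a, hτ.1.trans_le a, b⟩
    rw [e1, integral_indicator measurableSet_Ici, Measure.restrict_restrict measurableSet_Ici,
      e2, integral_Icc_eq_integral_Ioc, integral_smul_const,
      ← intervalIntegral.integral_of_le hlt.le, aux_beta_s16 hα hα1 hlt]
  rw [eL, eR, intervalIntegral.integral_smul] at hsw
  exact hsw

lemma aux_cap {n : ℕ} {α T C : ℝ} (hα : 0 < α) (hα1 : α < 1) (hT : 0 < T) {φ : ℝ → Evec n}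
    (hm : Measurable φ)
    (hC : ∀ᵐ t ∂volume.restrict (Icc (0:ℝ) T), ‖φ t‖ ≤ C) {x₀ : Evec n} {x : ℝ → Evec n}
    (hx : ∀ t ∈ Icc (0:ℝ) T, x t = x₀ + RLint α φ t) :
    ∀ᵐ t ∂volume.restrict (Icc (0:ℝ) T), CapDeriv α x t = φ t := by
  have hC' : ∀ᵐ t ∂volume.restrict (Icc (0:ℝ) T), ‖φ t‖ ≤ |C| := by
    filter_upwards [hC] with t h using h.trans (le_abs_self _)
  have hii : IntervalIntegrable φ volume 0 T := by
    have := aux_bdd_ii (α := 1) one_pos hm.aestronglyMeasurable hC 0 le_rfl hT.le le_rfl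
    simpa using this
  have hG := Gamma_pos_of_pos hα
  have hG1 := Gamma_pos_of_pos (s := 1 - α) (by linarith)
  have hx0 : x 0 = x₀ := by rw [hx 0 ⟨le_rfl, hT.le⟩]; simp [RLint]
  have key : ∀ s ∈ Icc (0:ℝ) T, (Gamma (1 - α))⁻¹ • ∫ τ in (0:ℝ)..s, ((s - τ) ^ (-α) : ℝ) • (x τ - x 0)
      = ∫ τ in (0:ℝ)..s, φ τ := by
    intro s hs
    have e : ∫ τ in (0:ℝ)..s, ((s - τ) ^ (-α) : ℝ) • (x τ - x 0) =
        ∫ r in (0:ℝ)..s, (Gamma α)⁻¹ • (((s - r) ^ (-α) : ℝ) •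
          (∫ τ in (0:ℝ)..r, ((r - τ) ^ (α - 1) : ℝ) • φ τ)) := by
      apply intervalIntegral.integral_congr
      intro r hr
      rw [uIcc_of_le hs.1] at hr
      simp only
      rw [hx r ⟨hr.1, hr.2.trans hs.2⟩, hx0, add_sub_cancel_left, RLint, smul_comm]
    rw [e, intervalIntegral.integral_smul, aux_semi hα hα1 hm (abs_nonneg C) hC' hs, smul_smul, smul_smul]
    rw [show (Gamma (1 - α))⁻¹ * (Gamma α)⁻¹ * (Gamma α * Gamma (1 - α)) = 1 by field_simp, one_smul]
  rw [ae_restrict_iff' measurableSet_Icc]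
  have hne : ∀ᵐ τ : ℝ, τ ≠ 0 := by simp [ae_iff, measure_singleton]
  have hne' : ∀ᵐ τ : ℝ, τ ≠ T := by simp [ae_iff, measure_singleton]
  filter_upwards [hne, hne', hii.ae_hasDerivAt_integral] with t h0 h1 h2 ht
  rw [uIcc_of_le hT.le] at h2
  rw [CapDeriv, RLderiv, ← (h2 ht 0 ⟨le_rfl, hT.le⟩).deriv]
  apply Filter.EventuallyEq.deriv_eq
  have : Ioo 0 T ∈ nhds t := Ioo_mem_nhds (lt_of_le_of_ne ht.1 (Ne.symm h0)) (lt_of_le_of_ne ht.2 h1)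
  filter_upwards [this] with s hs
  exact key s ⟨hs.1.le, hs.2.le⟩

lemma aux_gronwall_s16 {n : ℕ} {α k L A T : ℝ} (hα : 0 < α) (hk : 0 < k) (hT : 0 < T) (hL : 0 ≤ L)
    (hA : 0 ≤ A) (hkL : L * (1 / k) ^ α ≤ 1 / 2) {w : ℝ → ℝ} (hw : ContinuousOn w (Icc 0 T))
    (hw0 : ∀ t, 0 ≤ w t) {ψ : ℝ → Evec n}
    (hψ : ∀ᵐ t ∂volume.restrict (Icc (0:ℝ) T), ‖ψ t‖ ≤ L * w t)
    (hle : ∀ t ∈ Icc 0 T, w t ≤ A + ‖RLint α ψ t‖) :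
    ∀ t ∈ Icc 0 T, w t ≤ 2 * A * exp (k * t) := by
  obtain ⟨t₀, ht₀, hmax⟩ := isCompact_Icc.exists_isMaxOn (nonempty_Icc.2 hT.le)
    (f := fun t => exp (-(k * t)) * w t) (by fun_prop)
  set M := exp (-(k * t₀)) * w t₀ with hM
  have hM0 : 0 ≤ M := mul_nonneg (exp_pos _).le (hw0 _)
  have hwM : ∀ t ∈ Icc 0 T, w t ≤ M * exp (k * t) := by
    intro t ht
    have h1 : exp (-(k * t)) * w t ≤ M := hmax ht
    have h2 := mul_le_mul_of_nonneg_right h1 (exp_pos (k * t)).le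
    have h3 : exp (-(k * t)) * w t * exp (k * t) = w t := by
      rw [mul_right_comm, ← Real.exp_add]; simp
    linarith
  have h1 : ∀ᵐ t ∂volume.restrict (Icc (0:ℝ) T), ‖ψ t‖ ≤ (L * M) * exp (k * t) := by
    rw [ae_restrict_iff' measurableSet_Icc] at hψ ⊢
    filter_upwards [hψ] with t h ht
    refine (h ht).trans ?_
    rw [mul_assoc]
    exact mul_le_mul_of_nonneg_left (hwM t ht) hL
  have h2 := aux_RLint_exp hα hk h1 (mul_nonneg hL hM0) ht₀
  have h3 := hle t₀ ht₀
  have h4 : w t₀ = M * exp (k * t₀) := by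
    rw [hM, mul_right_comm, ← Real.exp_add]; simp
  have h5 : L * M * (1 / k) ^ α * exp (k * t₀) ≤ 1 / 2 * (M * exp (k * t₀)) := by
    have := mul_le_mul_of_nonneg_right hkL (mul_nonneg hM0 (exp_pos (k * t₀)).le)
    nlinarith
  have h6 : M * exp (k * t₀) ≤ 2 * A := by linarith
  have h7 : 1 ≤ exp (k * t₀) := one_le_exp (mul_nonneg hk.le ht₀.1)
  have h8 : M ≤ 2 * A := by nlinarith
  intro t ht
  exact (hwM t ht).trans (mul_le_mul_of_nonneg_right h8 (exp_pos _).le)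

lemma aux_inteq {α T : ℝ} (hα : 0 < α) (hα1 : α < 1) (hT : 0 < T) {n nu nv : ℕ}
    {g : ℝ → Evec n → Evec nu → Evec nv → Evec n} {x₀ : Evec n}
    {u : ℝ → Evec nu} {v : ℝ → Evec nv} {x : ℝ → Evec n} (h : IsCtrlSol α T g x₀ u v x) :
    ∃ φ : ℝ → Evec n, Measurable φ ∧
    (∃ C : ℝ, ∀ᵐ t ∂volume.restrict (Icc (0:ℝ) T), ‖φ t‖ ≤ C) ∧
    (∀ t ∈ Icc (0:ℝ) T, x t = x₀ + RLint α φ t) ∧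
    (∀ᵐ t ∂volume.restrict (Icc (0:ℝ) T), φ t = g t (x t) (u t) (v t)) ∧
    ContinuousOn x (Icc 0 T) := by
  obtain ⟨⟨φ, hm, ⟨C, hC⟩, hx⟩, hd⟩ := h
  refine ⟨φ, hm, ⟨C, hC⟩, hx, ?_, ?_⟩
  · filter_upwards [hd, aux_cap hα hα1 hT hm hC hx] with t h1 h2
    rw [← h1, h2]
  · exact ((continuousOn_const (c := x₀)).add
      (aux_cont hα hα1 hm.aestronglyMeasurable hC)).congr hx

lemma aux_apriori {α T k cg : ℝ} (hα : 0 < α) (hα1 : α < 1) (hT : 0 < T) {n nu nv : ℕ}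
    {g : ℝ → Evec n → Evec nu → Evec nv → Evec n} {x₀ : Evec n}
    {u : ℝ → Evec nu} {v : ℝ → Evec nv} {x : ℝ → Evec n} (h : IsCtrlSol α T g x₀ u v x)
    (hcg : 0 < cg) (hk : 0 < k) (hkc : cg * (1 / k) ^ α ≤ 1 / 2)
    (hg3 : ∀ t ∈ Icc (0:ℝ) T, ∀ (x : Evec n) (u : Evec nu) (v : Evec nv),
      ‖g t x u v‖ ≤ (1 + ‖x‖) * cg) :
    ∀ t ∈ Icc 0 T, 1 + ‖x t‖ ≤ 2 * (1 + ‖x₀‖) * exp (k * t) := by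
  obtain ⟨φ, hm, ⟨C, hC⟩, hx, hφ, hc⟩ := aux_inteq hα hα1 hT h
  refine aux_gronwall_s16 (w := fun t => 1 + ‖x t‖) (ψ := φ) hα hk hT hcg.le (by positivity) hkc
    (by fun_prop) (fun t => by positivity) ?_ ?_
  · rw [ae_restrict_iff' measurableSet_Icc] at hφ ⊢
    filter_upwards [hφ] with t h1 ht
    rw [h1 ht, mul_comm]
    exact hg3 t ht _ _ _
  · intro t ht
    rw [hx t ht]
    linarith [norm_add_le x₀ (RLint α φ t)]

lemma aux_exists {α T R₀ k cg : ℝ} (hα : 0 < α) (hα1 : α < 1) (hT : 0 < T) (hR₀ : 0 < R₀)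
    {n nu nv : ℕ} {P : Set (Evec nu)} {Q : Set (Evec nv)}
    {g : ℝ → Evec n → Evec nu → Evec nv → Evec n}
    (hg1 : Continuous fun p : ℝ × Evec n × Evec nu × Evec nv =>
      g p.1 p.2.1 p.2.2.1 p.2.2.2)
    (hg2 : ∀ r > (0:ℝ), ∃ lam > (0:ℝ), ∀ t ∈ Icc (0:ℝ) T, ∀ x y : Evec n,
      ‖x‖ ≤ r → ‖y‖ ≤ r → ∀ u ∈ P, ∀ v ∈ Q,
        ‖g t x u v - g t y u v‖ ≤ lam * ‖x - y‖)
    (hcg : 0 < cg) (hk : 0 < k) (hkc : cg * (1 / k) ^ α ≤ 1 / 2)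
    (hg3 : ∀ t ∈ Icc (0:ℝ) T, ∀ (x : Evec n) (u : Evec nu) (v : Evec nv),
      ‖g t x u v‖ ≤ (1 + ‖x‖) * cg) {x₀ : Evec n} (hx₀ : ‖x₀‖ ≤ R₀)
    {u : ℝ → Evec nu} (hu : Measurable u) (huP : ∀ t ∈ Ico (0:ℝ) T, u t ∈ P)
    {v : ℝ → Evec nv} (hv : Measurable v) (hvQ : ∀ t ∈ Ico (0:ℝ) T, v t ∈ Q) :
    ∃ x : ℝ → Evec n, IsCtrlSol α T g x₀ u v x := by
  set M := 2 * (1 + R₀) with hM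
  have hMpos : 0 < M := by positivity
  obtain ⟨lam, hlam, hlip⟩ := hg2 (M * exp (k * T)) (by positivity)
  obtain ⟨l, hl, hll⟩ := aux_k hα hlam
  have hTT : (0:ℝ) ≤ T := hT.le
  let X : C(Icc (0:ℝ) T, Evec n) → ℝ → Evec n := fun y t => exp (l * t) • y (projIcc 0 T hTT t)
  have hXc : ∀ y, Continuous (X y) := fun y =>
    (by fun_prop : Continuous fun t : ℝ => exp (l * t)).smul (y.continuous.comp continuous_projIcc)
  let φ : C(Icc (0:ℝ) T, Evec n) → ℝ → Evec n := fun y t => g t (X y t) (u t) (v t)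
  have hφm : ∀ y, Measurable (φ y) := fun y =>
    hg1.measurable.comp (measurable_id.prodMk ((hXc y).measurable.prodMk (hu.prodMk hv)))
  have hφb : ∀ y, ∃ C, ∀ᵐ t ∂volume.restrict (Icc (0:ℝ) T), ‖φ y t‖ ≤ C := by
    intro y
    obtain ⟨B, hB⟩ := isCompact_Icc.exists_bound_of_continuousOn (hXc y).continuousOn (s := Icc 0 T)
    refine ⟨(1 + B) * cg, ?_⟩
    rw [ae_restrict_iff' measurableSet_Icc]
    filter_upwards with t ht
    have := hB t ht
    refine (hg3 t ht _ _ _).trans ?_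
    gcongr
  have hRc : ∀ y, ContinuousOn (RLint α (φ y)) (Icc 0 T) := fun y => by
    obtain ⟨C, hC⟩ := hφb y
    exact aux_cont hα hα1 (hφm y).aestronglyMeasurable hC
  let Φ : C(Icc (0:ℝ) T, Evec n) → C(Icc (0:ℝ) T, Evec n) := fun y =>
    ⟨fun t => exp (-(l * t)) • (x₀ + RLint α (φ y) t), by
      have h1 : Continuous fun t : Icc (0:ℝ) T => RLint α (φ y) t :=
        continuousOn_iff_continuous_domRestrict.1 (hRc y)
      exact (by fun_prop : Continuous fun t : Icc (0:ℝ) T => exp (-(l * (t:ℝ)))).smul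
        (continuous_const.add h1)⟩
  have hXΦ : ∀ y, ∀ t ∈ Icc (0:ℝ) T, X (Φ y) t = x₀ + RLint α (φ y) t := by
    intro y t ht
    simp only [X, Φ, ContinuousMap.coe_mk, projIcc_of_mem hTT ht]
    rw [smul_smul, ← Real.exp_add]
    simp
  let S : Set C(Icc (0:ℝ) T, Evec n) := {y | ∀ t : Icc (0:ℝ) T,
    1 + ‖exp (l * (t:ℝ)) • y t‖ ≤ M * exp (k * t)}
  have hSX : ∀ y ∈ S, ∀ t ∈ Icc (0:ℝ) T, 1 + ‖X y t‖ ≤ M * exp (k * t) := by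
    intro y hy t ht
    have := hy ⟨t, ht⟩
    simpa only [X, projIcc_of_mem hTT ht] using this
  have hSR : ∀ y ∈ S, ∀ t ∈ Icc (0:ℝ) T, ‖X y t‖ ≤ M * exp (k * T) := by
    intro y hy t ht
    have h1 := hSX y hy t ht
    have h2 : M * exp (k * t) ≤ M * exp (k * T) := by
      have := ht.2
      gcongr
    linarith
  have hScl : IsClosed S := by
    have : S = ⋂ t : Icc (0:ℝ) T, {y | 1 + ‖exp (l * (t:ℝ)) • y t‖ ≤ M * exp (k * t)} := by
      ext y; simp [S]
    rw [this]
    refine isClosed_iInter fun t => isClosed_le ?_ continuous_const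
    fun_prop
  have hmaps : MapsTo Φ S S := by
    intro y hy t
    have h0 := hXΦ y t t.2
    simp only [X, projIcc_val] at h0
    rw [h0]
    have h1 : ∀ᵐ t ∂volume.restrict (Icc (0:ℝ) T), ‖φ y t‖ ≤ (cg * M) * exp (k * t) := by
      rw [ae_restrict_iff' measurableSet_Icc]
      filter_upwards with t ht
      have h3 := hg3 t ht (X y t) (u t) (v t)
      have h4 := mul_le_mul_of_nonneg_right (hSX y hy t ht) hcg.le
      calc _ ≤ _ := h3
        _ ≤ _ := h4
        _ = _ := by ring
    have h2 := aux_RLint_exp hα hk h1 (by positivity) t.2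
    have h5 : cg * M * (1 / k) ^ α * exp (k * t) ≤ 1 / 2 * (M * exp (k * t)) := by
      have := mul_le_mul_of_nonneg_right hkc (mul_nonneg hMpos.le (exp_pos (k * t)).le)
      nlinarith
    have h7 : 1 ≤ exp (k * t) := one_le_exp (mul_nonneg hk.le t.2.1)
    have h8 := norm_add_le x₀ (RLint α (φ y) t)
    nlinarith
  have hlipS : ∀ y ∈ S, ∀ z ∈ S, dist (Φ y) (Φ z) ≤ 1 / 2 * dist y z := by
    intro y hy z hz
    rw [ContinuousMap.dist_le (by positivity)]
    intro t
    obtain ⟨C, hC⟩ := hφb y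
    obtain ⟨D, hD⟩ := hφb z
    have h1 : ∀ᵐ t ∂volume.restrict (Icc (0:ℝ) T), ‖φ y t - φ z t‖ ≤
        (lam * dist y z) * exp (l * t) := by
      have hne : ∀ᵐ τ : ℝ, τ ≠ T := by simp [ae_iff, measure_singleton]
      rw [ae_restrict_iff' measurableSet_Icc]
      filter_upwards [hne] with t hn ht
      have ht' : t ∈ Ico 0 T := ⟨ht.1, lt_of_le_of_ne ht.2 hn⟩
      refine (hlip t ht _ _ (hSR y hy t ht) (hSR z hz t ht) _ (huP t ht') _ (hvQ t ht')).trans ?_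
      rw [mul_assoc]
      refine mul_le_mul_of_nonneg_left ?_ hlam.le
      simp only [X]
      rw [← smul_sub, norm_smul, Real.norm_of_nonneg (exp_pos _).le, mul_comm, ← dist_eq_norm]
      exact mul_le_mul_of_nonneg_right (ContinuousMap.dist_apply_le_dist _) (exp_pos _).le
    have h2 := aux_RLint_exp hα hl h1 (by positivity) t.2
    rw [← aux_RLint_sub hα (hφm y).aestronglyMeasurable hC (hφm z).aestronglyMeasurable hD t.2] at h2
    simp only [Φ, ContinuousMap.coe_mk]
    rw [dist_eq_norm, ← smul_sub, add_sub_add_left_eq_sub, norm_smul,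
      Real.norm_of_nonneg (exp_pos _).le]
    calc _ ≤ exp (-(l * t)) * (lam * dist y z * (1 / l) ^ α * exp (l * t)) := by gcongr
      _ = (lam * (1 / l) ^ α) * dist y z * (exp (-(l * t)) * exp (l * t)) := by ring
      _ = (lam * (1 / l) ^ α) * dist y z := by rw [← Real.exp_add]; simp
      _ ≤ _ := by gcongr
  have hcontr : ContractingWith (1 / 2 : NNReal) (hmaps.restrict Φ S S) := by
    refine ⟨by rw [← NNReal.coe_lt_coe]; norm_num, LipschitzWith.of_dist_le_mul ?_⟩
    intro y z
    have := hlipS y y.2 z z.2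
    simpa [Subtype.dist_eq] using this
  have h0S : (0 : C(Icc (0:ℝ) T, Evec n)) ∈ S := by
    intro t
    have h7 : 1 ≤ exp (k * t) := one_le_exp (mul_nonneg hk.le t.2.1)
    simp only [ContinuousMap.zero_apply, smul_zero, norm_zero]
    nlinarith
  obtain ⟨y, hyS, hfix, -⟩ := hcontr.exists_fixedPoint' hScl.isComplete hmaps h0S (edist_ne_top _ _)
  have hx : ∀ t ∈ Icc (0:ℝ) T, X y t = x₀ + RLint α (φ y) t := by
    intro t ht
    rw [← hXΦ y t ht, hfix.eq]
  obtain ⟨C, hC⟩ := hφb y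
  exact ⟨X y, ⟨φ y, hφm y, ⟨C, hC⟩, hx⟩, aux_cap hα hα1 hT (hφm y) hC hx⟩

theorem stmt16 (α T R₀ : ℝ) (hα : α ∈ Ioo (0:ℝ) 1) (hT : 0 < T) (hR₀ : 0 < R₀)
    (n nu nv : ℕ) (P : Set (Evec nu)) (Q : Set (Evec nv))
    (hP : IsCompact P) (hQ : IsCompact Q) (hPne : P.Nonempty) (hQne : Q.Nonempty)
    (g : ℝ → Evec n → Evec nu → Evec nv → Evec n)
    (hg1 : Continuous fun p : ℝ × Evec n × Evec nu × Evec nv =>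
      g p.1 p.2.1 p.2.2.1 p.2.2.2)
    (hg2 : ∀ r > (0:ℝ), ∃ lam > (0:ℝ), ∀ t ∈ Icc (0:ℝ) T, ∀ x y : Evec n,
      ‖x‖ ≤ r → ‖y‖ ≤ r → ∀ u ∈ P, ∀ v ∈ Q,
        ‖g t x u v - g t y u v‖ ≤ lam * ‖x - y‖)
    (cg : ℝ) (hcg : 0 < cg)
    (hg3 : ∀ t ∈ Icc (0:ℝ) T, ∀ (x : Evec n) (u : Evec nu) (v : Evec nv),
      ‖g t x u v‖ ≤ (1 + ‖x‖) * cg) :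
    (∀ x₀ : Evec n, ‖x₀‖ ≤ R₀ →
      ∀ u : ℝ → Evec nu, Measurable u → (∀ t ∈ Ico (0:ℝ) T, u t ∈ P) →
      ∀ v : ℝ → Evec nv, Measurable v → (∀ t ∈ Ico (0:ℝ) T, v t ∈ Q) →
      ∃ x : ℝ → Evec n, IsCtrlSol α T g x₀ u v x ∧
        ∀ x' : ℝ → Evec n, IsCtrlSol α T g x₀ u v x' → EqOn x' x (Icc (0:ℝ) T)) ∧
    ∃ R H : ℝ, 0 < R ∧ 0 < H ∧
      ∀ (x₀ : Evec n) (u : ℝ → Evec nu) (v : ℝ → Evec nv) (x : ℝ → Evec n),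
        ‖x₀‖ ≤ R₀ → Measurable u → (∀ t ∈ Ico (0:ℝ) T, u t ∈ P) →
        Measurable v → (∀ t ∈ Ico (0:ℝ) T, v t ∈ Q) →
        IsCtrlSol α T g x₀ u v x →
        ∀ t ∈ Icc (0:ℝ) T, ∀ τ ∈ Icc (0:ℝ) T,
          ‖x t‖ ≤ R ∧ ‖x t - x τ‖ ≤ H * |t - τ| ^ α := by

  obtain ⟨hα0, hα1⟩ := hα
  obtain ⟨k, hk, hkc⟩ := aux_k hα0 hcg
  have hRpos : 0 < 2 * (1 + R₀) * exp (k * T) := by positivity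
  have hbound : ∀ (x₀ : Evec n) (u : ℝ → Evec nu) (v : ℝ → Evec nv) (x : ℝ → Evec n),
      ‖x₀‖ ≤ R₀ → IsCtrlSol α T g x₀ u v x → ∀ t ∈ Icc (0:ℝ) T,
        ‖x t‖ ≤ 2 * (1 + R₀) * exp (k * T) := by
    intro x₀ u v x hx₀ h t ht
    have h1 := aux_apriori hα0 hα1 hT h hcg hk hkc hg3 t ht
    have h2 : 2 * (1 + ‖x₀‖) * exp (k * t) ≤ 2 * (1 + R₀) * exp (k * T) := by
      have := ht.2
      gcongr
    linarith
  refine ⟨?_, 2 * (1 + R₀) * exp (k * T),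
    2 * ((1 + 2 * (1 + R₀) * exp (k * T)) * cg) / (α * Gamma α), hRpos, ?_, ?_⟩
  · intro x₀ hx₀ u hu huP v hv hvQ
    obtain ⟨x, hx⟩ := aux_exists hα0 hα1 hT hR₀ hg1 hg2 hcg hk hkc hg3 hx₀ hu huP hv hvQ
    refine ⟨x, hx, ?_⟩
    intro x' hx' t ht
    obtain ⟨lam, hlam, hlip⟩ := hg2 _ hRpos
    obtain ⟨l, hl, hll⟩ := aux_k hα0 hlam
    obtain ⟨φ, hm, ⟨C, hC⟩, he, hφ, hc⟩ := aux_inteq hα0 hα1 hT hx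
    obtain ⟨φ', hm', ⟨C', hC'⟩, he', hφ', hc'⟩ := aux_inteq hα0 hα1 hT hx'
    have key := aux_gronwall_s16 (w := fun t => ‖x' t - x t‖) (ψ := fun t => φ' t - φ t)
      hα0 hl hT hlam.le le_rfl hll (by fun_prop) (fun t => norm_nonneg _) ?_ ?_ t ht
    · simp only [mul_zero, zero_mul] at key
      exact sub_eq_zero.1 (norm_le_zero_iff.1 key)
    · have hne : ∀ᵐ τ : ℝ, τ ≠ T := by simp [ae_iff, measure_singleton]
      rw [ae_restrict_iff' measurableSet_Icc] at hφ hφ' ⊢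
      filter_upwards [hne, hφ, hφ'] with s hn h1 h2 hs
      have hs' : s ∈ Ico 0 T := ⟨hs.1, lt_of_le_of_ne hs.2 hn⟩
      rw [h1 hs, h2 hs]
      exact hlip s hs _ _ (hbound x₀ u v x' hx₀ hx' s hs) (hbound x₀ u v x hx₀ hx s hs) _
        (huP s hs') _ (hvQ s hs')
    · intro s hs
      rw [he s hs, he' s hs, add_sub_add_left_eq_sub,
        aux_RLint_sub hα0 hm'.aestronglyMeasurable hC' hm.aestronglyMeasurable hC hs, zero_add]
  · have := Gamma_pos_of_pos hα0
    positivity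
  · intro x₀ u v x hx₀ hu huP hv hvQ h t ht τ hτ
    refine ⟨hbound x₀ u v x hx₀ h t ht, ?_⟩
    obtain ⟨φ, hm, ⟨C, hC⟩, he, hφ, hc⟩ := aux_inteq hα0 hα1 hT h
    rw [he t ht, he τ hτ, add_sub_add_left_eq_sub]
    refine aux_holder hα0 hα1 hm.aestronglyMeasurable (by positivity) ?_ ht hτ
    rw [ae_restrict_iff' measurableSet_Icc] at hφ ⊢
    filter_upwards [hφ] with s h1 hs
    rw [h1 hs]
    refine (hg3 s hs _ _ _).trans ?_
    have := hbound x₀ u v x hx₀ h s hs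
    gcongr
end
end
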